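/- arXiv:2508.20879 — 7 statements merged into one kernel-verified Lean document; each statement's English description precedes it below -/
import Mathlib

section
/- For every integer n > 0 and every integer k ≥ 3, there exists a necklace of length n over the alphabet Σ_k having completely unclustered Burrows–Wheeler transform. -/
/-!
A word `v` whose standard permutation `π` is a single cycle is the Burrows–Wheeler transform of some
necklace (`exists_bwt_eq`). So it suffices to find, over three letters, a word of length `n` without
equal neighbours whose standard permutation is cyclic.

Write `n = 3 * m + r` with `r < 3` and consider words made of `m` blocks, each a permutation of
`0, 1, 2`, followed by the first `r` letters of `0, 1, 2`. For such a word the set of values of `π`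
on a block does not depend on the order of the letters inside that block, so reordering a block by
`ρ` amounts to precomposing `π` with `ρ`. If `σ` is the first-return map of `π` on the block, the
new first-return map is `σ ∘ ρ`, and the block lies in one cycle as soon as this is a 3-cycle. Two
choices of `ρ` achieve this and they differ in the last letter they give to the block, so one of
them also avoids the first letter of the next block (`exists_rearrangement`). Such a reordering only
merges cycles, so going through the blocks from right to left makes each of them lie in a single
cycle, without equal neighbours (`exists_blocks`).

Finally, `π` sends the letter `0` of block `i` to `i`, so each position `p` of a full block shares
its cycle with `p / 3`, and the tail positions are sent to smaller ones. Hence all positions share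
the cycle of `0` (`exists_cyclic_word`). The length `n = 2` is treated separately.
-/

/-- The cyclic rotation of the word `w` of length `n` starting at position `j`. -/
def rotl {n k : ℕ} (w : Fin n → Fin k) (j : Fin n) : Fin n → Fin k :=
  fun i => w (i + j)

/-- Lexicographic order on words of the same length. -/
def LexLe {n k : ℕ} (f g : Fin n → Fin k) : Prop :=
  f = g ∨ ∃ i : Fin n, (∀ j : Fin n, j < i → f j = g j) ∧ f i < g i

instance {n k : ℕ} (f g : Fin n → Fin k) : Decidable (LexLe f g) := by
  unfold LexLe; infer_instance

/-- The starting positions of the `n` cyclic rotations of `w`, listed so that the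
corresponding rotations are in ascending lexicographic order (with multiplicity). -/
def sortedRot {n k : ℕ} (w : Fin n → Fin k) : List (Fin n) :=
  (List.finRange n).mergeSort fun a b => decide (LexLe (rotl w a) (rotl w b))

lemma length_sortedRot {n k : ℕ} (w : Fin n → Fin k) : (sortedRot w).length = n := by
  simp [sortedRot, List.length_mergeSort, List.length_finRange]

/-- The Burrows–Wheeler transform of (the necklace of) `w`: the `m`-th letter is the
last letter of the `m`-th cyclic rotation of `w` in ascending lexicographic order.
The last letter of the rotation starting at `j` is `w ((j + n - 1) % n)`. -/
def bwt {n k : ℕ} (w : Fin n → Fin k) : Fin n → Fin k :=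
  fun m =>
    let j : Fin n := (sortedRot w)[m.val]'(by rw [length_sortedRot]; exact m.isLt)
    w ⟨(j.val + (n - 1)) % n, Nat.mod_lt _ m.pos⟩

/-- A word is completely unclustered if no two consecutive letters are equal. -/
def Unclustered {n k : ℕ} (v : Fin n → Fin k) : Prop :=
  ∀ (i : ℕ) (h : i + 1 < n), v ⟨i, Nat.lt_of_succ_lt h⟩ ≠ v ⟨i + 1, h⟩

/-- The position `k * b + i` inside a word of length `k * n`, i.e. position `i` of block `b`. -/
def blockIdx {k n : ℕ} (b : Fin n) (i : Fin k) : Fin (k * n) :=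
  ⟨k * b.val + i.val, by
    have hb : b.val + 1 ≤ n := b.isLt
    have hi : i.val < k := i.isLt
    have h1 : k * (b.val + 1) ≤ k * n := Nat.mul_le_mul_left k hb
    have h2 : k * (b.val + 1) = k * b.val + k := by ring
    omega⟩

/-- A word of length `k * n` is an alphabet-permutation power if each of its `n`
consecutive blocks of length `k` contains every letter of the alphabet. -/
def IsAlphaPermPower {k n : ℕ} (v : Fin (k * n) → Fin k) : Prop :=
  ∀ b : Fin n, Function.Surjective fun i : Fin k => v (blockIdx b i)

/-- An alphabet-permutation power `v` of length `k * n` has a tie at block `i`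
if `v (k*i + k - 1) = v (k*(i+1))`. -/
def TieAt {k n : ℕ} (v : Fin (k * n) → Fin k) (i : ℕ) : Prop :=
  ∃ (h1 : k * i + (k - 1) < k * n) (h2 : k * (i + 1) < k * n),
    v ⟨k * i + (k - 1), h1⟩ = v ⟨k * (i + 1), h2⟩

/-- `π` is the standard permutation of the word `w`. -/
def IsStdPerm {n k : ℕ} (w : Fin n → Fin k) (π : Equiv.Perm (Fin n)) : Prop :=
  ∀ i j : Fin n, π i < π j ↔ (w i < w j ∨ (w i = w j ∧ i < j))

/-- A word is primitive iff it is fixed by no nontrivial cyclic rotation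
(equivalently, it is not a proper power). -/
def IsPrimitiveWord {n k : ℕ} (w : Fin n → Fin k) : Prop :=
  ∀ j : Fin n, rotl w j = w → j.val = 0

/-- The circular factor of length `n` of `w` starting at position `p`. -/
def circFactor {N k : ℕ} (w : Fin N → Fin k) (p : Fin N) (n : ℕ) : Fin n → Fin k :=
  fun t => w ⟨(p.val + t.val) % N, Nat.mod_lt _ p.pos⟩

/-- A de Bruijn word of order `n` over `Σ_k`: every word of length `n` occurs
exactly once as a circular factor. -/
def IsDeBruijn (k n : ℕ) (w : Fin (k ^ n) → Fin k) : Prop :=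
  ∀ f : Fin n → Fin k, ∃! p : Fin (k ^ n), circFactor w p n = f

/-- Cyclic successor of an index. -/
def nextIdx {N : ℕ} (i : Fin N) : Fin N := ⟨(i.val + 1) % N, Nat.mod_lt _ i.pos⟩

/-- A Hamiltonian cycle of the graph on `V` with edge set `E`, given as a cyclic
arrangement of all vertices. -/
def IsHamCycle {V : Type*} [Fintype V] (E : Set (V × V))
    (γ : Fin (Fintype.card V) → V) : Prop :=
  Function.Bijective γ ∧ ∀ i, (γ i, γ (nextIdx i)) ∈ E

/-- The Hamiltonian cycle `γ` visits the edge `e`. -/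
def Visits {V : Type*} [Fintype V] (γ : Fin (Fintype.card V) → V) (e : V × V) : Prop :=
  ∃ i, γ i = e.1 ∧ γ (nextIdx i) = e.2

/-! ### Inverting the transform -/

open Equiv in
/-- A word whose standard permutation is a single cycle is a Burrows–Wheeler transform. Going
backwards along the cycle from `0`, the position reached after `j` steps is the rank of the rotation
starting at `j`, and reading letters along the way spells the preimage `w`. -/
lemma exists_bwt_eq {n k : ℕ} (hn : 0 < n) (v : Fin n → Fin k) (π : Perm (Fin n))
    (hstd : IsStdPerm v π) (hcyc : ∀ x y, π.SameCycle x y) :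
    ∃ w : Fin n → Fin k, bwt w = v := by
  set σ : Perm (Fin n) := π⁻¹ with hσ
  let z : Fin n := ⟨0, hn⟩
  have hon : σ.IsCycleOn ((Finset.univ : Finset (Fin n)) : Set (Fin n)) := by
    refine ⟨by simp [Set.bijOn_univ], fun x _ y _ => ?_⟩
    rw [hσ, Perm.sameCycle_inv]
    exact hcyc x y
  have hpow : ∀ a b : ℕ, ∀ x, a ≡ b [MOD n] → (σ ^ a) x = (σ ^ b) x := fun a b x h => by
    rw [hon.pow_apply_eq_pow_apply (Finset.mem_univ x)]
    simpa using h
  have hreach : ∀ x y, ∃ t < n, (σ ^ t) x = y := fun x y => by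
    simpa using hon.exists_pow_eq (Finset.mem_univ x) (Finset.mem_univ y)
  have hstep : ∀ x y, x < y → v (σ x) < v (σ y) ∨ (v (σ x) = v (σ y) ∧ σ x < σ y) :=
    fun x y h => (hstd (σ x) (σ y)).1 (by simpa [hσ] using h)
  -- The rotation of rank `x` is the word `t ↦ v (σ ^ (t + 1) x)`. If those of ranks `x < y` never
  -- differed, `σ ^ t x < σ ^ t y` would hold for all `t < n`; but some `σ ^ t y` is `0`.
  have hlex : ∀ x y, x < y → ∃ i : Fin n,
      (∀ j : Fin n, j < i → v ((σ ^ (j.val + 1)) x) = v ((σ ^ (j.val + 1)) y)) ∧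
        v ((σ ^ (i.val + 1)) x) < v ((σ ^ (i.val + 1)) y) := by
    intro x y hxy
    by_contra hcon
    have key : ∀ t ≤ n, (σ ^ t) x < (σ ^ t) y ∧
        ∀ j < t, v ((σ ^ (j + 1)) x) = v ((σ ^ (j + 1)) y) := by
      intro t
      induction t with
      | zero => intro _; simpa using hxy
      | succ t ih =>
        intro ht
        obtain ⟨h1, h2⟩ := ih (by omega)
        have h3 := hstep _ _ h1
        simp only [← Perm.mul_apply, ← pow_succ'] at h3
        rcases h3 with h3 | ⟨h3, h4⟩
        · exact (hcon ⟨⟨t, ht⟩, fun j hj => h2 j hj, h3⟩).elim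
        · refine ⟨h4, fun j hj => ?_⟩
          rcases Nat.lt_succ_iff_lt_or_eq.1 hj with hj | rfl
          · exact h2 j hj
          · exact h3
    obtain ⟨t, ht, hty⟩ := hreach y z
    have := (key t ht.le).1
    rw [hty] at this
    exact absurd this (by simp [z, Fin.lt_def])
  -- `row j` is the rank of the rotation starting at `j`.
  let row : Fin n → Fin n := fun j => (σ ^ j.val) z
  have hrow : Function.Bijective row := by
    rw [← Finite.surjective_iff_bijective]
    intro y
    obtain ⟨t, ht, hty⟩ := hreach z y
    exact ⟨⟨t, ht⟩, hty⟩
  let w : Fin n → Fin k := fun j => v ((σ ^ (j.val + 1)) z)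
  have hrot : ∀ a i : Fin n, rotl w a i = v ((σ ^ (i.val + 1)) (row a)) := by
    intro a i
    simp only [rotl, w, row, ← Perm.mul_apply, ← pow_add]
    congr 1
    apply hpow
    rw [Fin.val_add, show i.val + 1 + a.val = (i.val + a.val) + 1 by ring]
    exact (Nat.mod_modEq _ _).add_right 1
  have hle : ∀ a b : Fin n, LexLe (rotl w a) (rotl w b) ↔ row a ≤ row b := by
    have hlt : ∀ a b : Fin n, row a < row b → ∃ i : Fin n,
        (∀ j : Fin n, j < i → rotl w a j = rotl w b j) ∧ rotl w a i < rotl w b i := by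
      intro a b h
      simpa only [hrot] using hlex _ _ h
    intro a b
    rcases lt_trichotomy (row a) (row b) with h | h | h
    · exact ⟨fun _ => h.le, fun _ => Or.inr (hlt a b h)⟩
    · exact ⟨fun _ => h.le, fun _ => Or.inl (by rw [hrow.1 h])⟩
    · refine ⟨fun hab => ?_, fun h' => absurd h h'.not_gt⟩
      obtain ⟨i, h1, h2⟩ := hlt b a h
      rcases hab with hab | ⟨i', h1', h2'⟩
      · rw [hab] at h2
        exact absurd h2 (lt_irrefl _)
      · rcases lt_trichotomy i i' with hi | rfl | hi
        · exact absurd h2 (by rw [h1' i hi]; exact lt_irrefl _)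
        · exact absurd h2 h2'.asymm
        · exact absurd h2' (by rw [h1 i' hi]; exact lt_irrefl _)
  have hsort : (sortedRot w).map row = List.finRange n := by
    apply List.Perm.eq_of_pairwise (le := (· ≤ ·))
    · intro a b _ _ h1 h2
      exact le_antisymm h1 h2
    · rw [List.pairwise_map]
      have := List.pairwise_mergeSort (l := List.finRange n)
        (le := fun a b => decide (LexLe (rotl w a) (rotl w b)))
        (by simp only [decide_eq_true_eq, hle]; exact fun _ _ _ => le_trans)
        (by simp only [Bool.or_eq_true, decide_eq_true_eq, hle]; exact fun a b => le_total _ _)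
      exact this.imp fun h => (hle _ _).1 (of_decide_eq_true h)
    · exact (List.sortedLT_finRange n).sortedLE.pairwise
    · refine ((List.mergeSort_perm _ _).map row).trans ?_
      rw [List.perm_ext_iff_of_nodup ((List.nodup_finRange n).map hrow.1) (List.nodup_finRange n)]
      intro a
      simpa using hrow.2 a
  refine ⟨w, funext fun m => ?_⟩
  have hm : row ((sortedRot w)[m.val]'(by rw [length_sortedRot]; exact m.isLt)) = m := by
    have h : ((sortedRot w).map row)[m.val]'(by simp [length_sortedRot]) =
        (List.finRange n)[m.val]'(by simp) := by
      simp only [hsort]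
    simpa using h
  simp only [bwt, w]
  conv_rhs => rw [← hm]
  congr 1
  apply hpow
  set j := (sortedRot w)[m.val]'(by rw [length_sortedRot]; exact m.isLt)
  refine ((Nat.mod_modEq _ _).add_right 1).trans ?_
  rw [show j.val + (n - 1) + 1 = j.val + n by omega]
  exact Nat.add_modEq_right

/-! ### Rearranging the arguments of a permutation -/

open Equiv in
/-- The first-return map of `π` on the range of an injective family `a` is a permutation of it.
No intermediate point of the orbit from `a i` to `a (σ i)` belongs to the family. -/
lemma exists_firstReturn {α ι : Type*} [Finite α] [Finite ι] (π : Perm α) (a : ι → α) :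
    Function.Injective a → ∃ σ : Perm ι, ∀ i, ∃ t, (π ^ (t + 1)) (a i) = a (σ i) ∧
      ∀ s < t, ∀ j, (π ^ (s + 1)) (a i) ≠ a j := by
  classical
  intro ha
  have hex : ∀ i, ∃ t, ∃ j, (π ^ (t + 1)) (a i) = a j := fun i => by
    refine ⟨orderOf π - 1, i, ?_⟩
    rw [Nat.sub_add_cancel (orderOf_pos π), pow_orderOf_eq_one, Perm.one_apply]
  have hmin : ∀ i, ∃ j t, (π ^ (t + 1)) (a i) = a j ∧ ∀ s < t, ∀ j, (π ^ (s + 1)) (a i) ≠ a j :=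
    fun i => by
      obtain ⟨j, hj⟩ := Nat.find_spec (hex i)
      exact ⟨j, _, hj, fun s hs j' hj' => Nat.find_min (hex i) hs ⟨j', hj'⟩⟩
  choose f t hf hft using hmin
  have aux : ∀ i i', f i = f i' → t i ≤ t i' → i = i' := by
    intro i i' h hle
    have h1 : (π ^ (t i + 1)) (a i) = (π ^ (t i + 1)) ((π ^ (t i' - t i)) (a i')) := by
      rw [hf, h, ← hf i', ← Perm.mul_apply, ← pow_add]
      congr 2
      omega
    have h2 := (π ^ (t i + 1)).injective h1
    rcases Nat.eq_zero_or_pos (t i' - t i) with h0 | h0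
    · rw [h0] at h2
      exact ha (by simpa using h2)
    -- Here `a i'` would return to `a i` strictly before its first return.
    · refine absurd h2.symm ?_
      have := hft i' (t i' - t i - 1) (by omega) i
      rwa [Nat.sub_add_cancel h0] at this
  have hinj : Function.Injective f := fun i i' h => by
    rcases le_total (t i) (t i') with hle | hle
    · exact aux i i' h hle
    · exact (aux i' i h.symm hle).symm
  exact ⟨Equiv.ofBijective f (Finite.injective_iff_bijective.1 hinj), fun i => ⟨t i, hf i, hft i⟩⟩

open Equiv in
/-- Precomposing `π` with a rearrangement `ρ` of the points `a i` turns the first-return map `σ` into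
`σ ∘ ρ`. -/
lemma sameCycle_of_firstReturn {α ι : Type*} {π π' : Perm α} {a : ι → α} {σ ρ : Perm ι}
    (hσ : ∀ i, ∃ t, (π ^ (t + 1)) (a i) = a (σ i) ∧ ∀ s < t, ∀ j, (π ^ (s + 1)) (a i) ≠ a j)
    (hin : ∀ i, π' (a i) = π (a (ρ i))) (hout : ∀ x, (∀ i, x ≠ a i) → π' x = π x) (i : ι) :
    π'.SameCycle (a i) (a (σ (ρ i))) := by
  obtain ⟨t, ht, hmin⟩ := hσ (ρ i)
  have key : ∀ s ≤ t, (π' ^ (s + 1)) (a i) = (π ^ (s + 1)) (a (ρ i)) := by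
    intro s
    induction s with
    | zero => intro _; simpa using hin i
    | succ s ih =>
      intro hs
      rw [pow_succ', Perm.mul_apply, ih (by omega), hout _ (hmin s (by omega)),
        ← Perm.mul_apply, ← pow_succ']
  refine ⟨(t + 1 : ℕ), ?_⟩
  rw [zpow_natCast, key t le_rfl, ht]

open Equiv in
/-- If a rearrangement of the points `a i` puts all of them in one cycle, it only merges cycles: no
two points that shared a cycle get separated. -/
lemma SameCycle.of_modify {α ι : Type*} {π π' : Perm α} {a : ι → α} {ρ : Perm ι}
    (hin : ∀ i, π' (a i) = π (a (ρ i))) (hout : ∀ x, (∀ i, x ≠ a i) → π' x = π x)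
    (hall : ∀ i j, π'.SameCycle (a i) (a j)) {x y : α} (h : π.SameCycle x y) :
    π'.SameCycle x y := by
  have hstep : ∀ x, π'.SameCycle x (π x) := by
    intro x
    by_cases hx : ∃ i, x = a i
    · obtain ⟨i, rfl⟩ := hx
      have h1 := hin (ρ⁻¹ i)
      rw [Perm.inv_def, Equiv.apply_symm_apply] at h1
      rw [← h1, Perm.sameCycle_apply_right]
      exact hall _ _
    · rw [← hout x (by simpa using hx), Perm.sameCycle_apply_right]
  have hnat : ∀ (t : ℕ) x, π'.SameCycle x ((π ^ t) x) := by
    intro t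
    induction t with
    | zero => intro x; simpa using Perm.SameCycle.refl _ _
    | succ t ih =>
      intro x
      rw [pow_succ', Perm.mul_apply]
      exact (ih x).trans (hstep _)
  obtain ⟨t, rfl⟩ := h
  obtain ⟨t, rfl | rfl⟩ := t.eq_nat_or_neg
  · rw [zpow_natCast]
    exact hnat _ _
  · have := hnat t ((π ^ (-(t : ℤ))) x)
    rw [zpow_neg, zpow_natCast, Perm.inv_def, Equiv.apply_symm_apply] at this
    rw [zpow_neg, zpow_natCast]
    exact this.symm

open Equiv in
/-- Two of the six permutations `ρ` make `σ ∘ ρ` a 3-cycle. They have equal parity, hence differ at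
`2`, so one of them avoids any forbidden value `f` there. -/
lemma exists_rearrangement : ∀ (σ : Perm (Fin 3)) (f : Fin 3), ∃ ρ : Perm (Fin 3), ρ 2 ≠ f ∧
    ∀ j, j = 0 ∨ j = σ (ρ 0) ∨ j = σ (ρ (σ (ρ 0))) := by
  decide

/-! ### Words made of alphabet permutations -/

/-- The word obtained by concatenating blocks of three letters, block `i` being the permutation
`τ i 0, τ i 1, τ i 2` of the alphabet `{0, 1, 2}`; only a prefix of this infinite word is used. -/
def letter (τ : ℕ → Equiv.Perm (Fin 3)) (p : ℕ) : Fin 3 :=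
  τ (p / 3) ⟨p % 3, Nat.mod_lt _ (by norm_num)⟩

/-- The value at `p` of the standard permutation of the prefix of length `3 * m + r` of
`letter τ`, when `r < 3` and block `m` is `0, 1, 2`: each letter occurs once in each block, so
`a * m + min r a` letters are smaller than `a`, and `p / 3` letters equal to `a` come before `p`. -/
def stdVal (m r : ℕ) (τ : ℕ → Equiv.Perm (Fin 3)) (p : ℕ) : ℕ :=
  (letter τ p).val * m + min r (letter τ p).val + p / 3

lemma letter_block (τ : ℕ → Equiv.Perm (Fin 3)) (i : ℕ) (t : Fin 3) :
    letter τ (3 * i + t) = τ i t := by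
  have h1 : (3 * i + t.val) / 3 = i := by omega
  have h2 : (3 * i + t.val) % 3 = t.val := by omega
  simp [letter, h1, h2]

lemma eq_of_letter_eq {τ : ℕ → Equiv.Perm (Fin 3)} {p q : ℕ} (h : letter τ p = letter τ q)
    (hpq : p / 3 = q / 3) : p = q := by
  unfold letter at h
  rw [hpq] at h
  have := congrArg Fin.val ((τ (q / 3)).injective h)
  simp only at this
  omega

lemma letter_tail {m : ℕ} {τ : ℕ → Equiv.Perm (Fin 3)} (hτ : τ m = 1) {p : ℕ} (hp : p / 3 = m) :
    (letter τ p).val = p % 3 := by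
  simp [letter, hp, hτ]

lemma stdVal_lt {m r : ℕ} (hr : r < 3) {τ : ℕ → Equiv.Perm (Fin 3)} (hτ : τ m = 1) {p : ℕ}
    (hp : p < 3 * m + r) : stdVal m r τ p < 3 * m + r := by
  have h1 := (letter τ p).isLt
  have h2 := fun h => letter_tail hτ (p := p) h
  unfold stdVal
  generalize (letter τ p).val = a at *
  interval_cases a <;> omega

lemma stdVal_lt_stdVal {m r : ℕ} (hr : r < 3) {τ : ℕ → Equiv.Perm (Fin 3)} (hτ : τ m = 1)
    {p q : ℕ} (hp : p < 3 * m + r)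
    (h : letter τ p < letter τ q ∨ (letter τ p = letter τ q ∧ p < q)) :
    stdVal m r τ p < stdVal m r τ q := by
  rcases h with h | ⟨h, hpq⟩
  · rw [Fin.lt_def] at h
    have h1 := (letter τ p).isLt
    have h3 := (letter τ q).isLt
    have h2 := fun h => letter_tail hτ (p := p) h
    unfold stdVal
    generalize (letter τ p).val = a at *
    generalize (letter τ q).val = b at *
    interval_cases a <;> interval_cases b <;> omega
  · have h1 : p / 3 ≠ q / 3 := fun h' => hpq.ne (eq_of_letter_eq h h')
    unfold stdVal
    rw [h]
    omega

lemma stdVal_lt_iff {m r : ℕ} (hr : r < 3) {τ : ℕ → Equiv.Perm (Fin 3)} (hτ : τ m = 1)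
    {p q : ℕ} (hp : p < 3 * m + r) (hq : q < 3 * m + r) :
    stdVal m r τ p < stdVal m r τ q ↔
      (letter τ p < letter τ q ∨ (letter τ p = letter τ q ∧ p < q)) := by
  refine ⟨fun h => ?_, stdVal_lt_stdVal hr hτ hp⟩
  by_contra hcon
  have h1 : p = q ∨ letter τ q < letter τ p ∨ (letter τ q = letter τ p ∧ q < p) := by
    rcases lt_trichotomy (letter τ p) (letter τ q) with h1 | h1 | h1 <;>
    rcases lt_trichotomy p q with h2 | h2 | h2 <;> simp_all
  rcases h1 with rfl | h1
  · exact lt_irrefl _ h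
  · exact h.asymm (stdVal_lt_stdVal hr hτ hq h1)

/-- The standard permutation of the prefix of length `3 * m + r` of `letter τ`. -/
noncomputable def stdPerm {m r : ℕ} (hr : r < 3) (τ : ℕ → Equiv.Perm (Fin 3)) (hτ : τ m = 1) :
    Equiv.Perm (Fin (3 * m + r)) :=
  Equiv.ofBijective (fun p => ⟨stdVal m r τ p, stdVal_lt hr hτ p.isLt⟩) <| by
    rw [← Finite.injective_iff_bijective]
    intro p q h
    have h := congrArg Fin.val h
    simp only at h
    have h1 := stdVal_lt_iff hr hτ p.isLt q.isLt
    have h2 := stdVal_lt_iff hr hτ q.isLt p.isLt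
    simp only [h, lt_irrefl, false_iff, not_or, not_and, not_lt] at h1 h2
    have h3 := le_antisymm h1.1 h2.1
    exact Fin.ext (le_antisymm (h2.2 h3) (h1.2 h3.symm))

lemma stdPerm_val {m r : ℕ} (hr : r < 3) (τ : ℕ → Equiv.Perm (Fin 3)) (hτ : τ m = 1)
    (p : Fin (3 * m + r)) : (stdPerm hr τ hτ p).val = stdVal m r τ p := rfl

/-! ### A cyclic standard permutation -/

open Equiv in
/-- The last `j` of the `m` full blocks can be arranged so that no letter repeats across their right
boundaries and the three positions of each of them lie in one cycle of the standard permutation. -/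
lemma exists_blocks {m r : ℕ} (hr : r < 3) : ∀ j ≤ m, ∃ (τ : ℕ → Perm (Fin 3)) (hτ : τ m = 1),
    (∀ i, m - j ≤ i → i < m → τ i 2 ≠ τ (i + 1) 0) ∧
    ∀ p q : Fin (3 * m + r), p.val / 3 = q.val / 3 → m - j ≤ p.val / 3 → p.val / 3 < m →
      (stdPerm hr τ hτ).SameCycle p q := by
  intro j
  induction j with
  | zero => exact fun _ => ⟨fun _ => 1, rfl, fun i _ _ => by omega, fun p q _ _ _ => by omega⟩
  | succ j ih =>
    intro hj
    obtain ⟨τ, hτ, htie, hcyc⟩ := ih (by omega)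
    obtain ⟨b, hb⟩ : ∃ b, b = m - (j + 1) := ⟨_, rfl⟩
    let a : Fin 3 → Fin (3 * m + r) := fun t => ⟨3 * b + t, by omega⟩
    have ha : Function.Injective a := fun s t h => by
      have := congrArg Fin.val h
      simp only [a] at this
      omega
    -- Block `b` is rearranged so that it is covered by one cycle and its last letter differs from the
    -- first letter of block `b + 1`; the blocks after `b` keep both properties.
    obtain ⟨σ, hσ⟩ := exists_firstReturn (stdPerm hr τ hτ) a ha
    obtain ⟨ρ, hρ, hσρ⟩ := exists_rearrangement σ ((τ b)⁻¹ (τ (b + 1) 0))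
    let τ' : ℕ → Perm (Fin 3) := Function.update τ b (τ b * ρ)
    have hne : ∀ i, i ≠ b → τ' i = τ i := fun i hi => Function.update_of_ne hi _ _
    have hself : τ' b = τ b * ρ := Function.update_self ..
    have hτ' : τ' m = 1 := by rw [hne m (by omega), hτ]
    have hin : ∀ t, stdPerm hr τ' hτ' (a t) = stdPerm hr τ hτ (a (ρ t)) := by
      intro t
      apply Fin.ext
      simp only [stdPerm_val, stdVal, a, letter_block, hself, Perm.mul_apply]
      omega
    have hdiv : ∀ p : Fin (3 * m + r), p.val / 3 = b → ∃ t, p = a t := fun p hp =>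
      ⟨⟨p.val % 3, by omega⟩, Fin.ext (by simp only [a]; omega)⟩
    have hout : ∀ p, (∀ t, p ≠ a t) → stdPerm hr τ' hτ' p = stdPerm hr τ hτ p := by
      intro p hp
      have hpb : p.val / 3 ≠ b := fun h => by
        obtain ⟨t, ht⟩ := hdiv p h
        exact hp t ht
      apply Fin.ext
      simp only [stdPerm_val, stdVal, letter, hne _ hpb]
    have h0 : ∀ t, (stdPerm hr τ' hτ').SameCycle (a 0) (a t) := by
      have hs := sameCycle_of_firstReturn hσ hin hout
      intro t
      rcases hσρ t with rfl | rfl | rfl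
      · exact Perm.SameCycle.refl _ _
      · exact hs 0
      · exact (hs 0).trans (hs _)
    have hall : ∀ s t, (stdPerm hr τ' hτ').SameCycle (a s) (a t) := fun s t =>
      (h0 s).symm.trans (h0 t)
    refine ⟨τ', hτ', fun i hi him => ?_, fun p q hpq hp hpm => ?_⟩
    · by_cases hib : i = b
      · subst hib
        rw [hself, hne (i + 1) (by omega), Perm.mul_apply]
        exact fun h => hρ (by rw [← h, Perm.inv_def, Equiv.symm_apply_apply])
      · rw [hne i hib, hne (i + 1) (by omega)]
        exact htie i (by omega) him
    · by_cases hpb : p.val / 3 = b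
      · obtain ⟨s, rfl⟩ := hdiv p hpb
        obtain ⟨t, rfl⟩ := hdiv q (by omega)
        exact hall s t
      · exact SameCycle.of_modify hin hout hall (hcyc p q hpq (by omega) hpm)

open Equiv in
/-- For every length there is a ternary word without equal neighbours whose standard permutation is
a single cycle. -/
lemma exists_cyclic_word (n : ℕ) (hn : 0 < n) : ∃ (v : Fin n → Fin 3)
    (π : Perm (Fin n)), IsStdPerm v π ∧ (∀ x y, π.SameCycle x y) ∧ Unclustered v := by
  by_cases hn2 : n = 2
  · subst hn2
    -- The block construction would give the word `01`, whose standard permutation is the identity.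
    refine ⟨![1, 0], swap 0 1, by unfold IsStdPerm; decide, fun x y => ?_, fun i h => ?_⟩
    · by_cases hxy : x = y
      · rw [hxy]
      · have h : swap (0 : Fin 2) 1 x = y := by revert x y; decide
        rw [← h, Perm.sameCycle_apply_right]
    · obtain rfl : i = 0 := by omega
      simp
  obtain ⟨m, r, hr, rfl⟩ : ∃ m r, r < 3 ∧ n = 3 * m + r :=
    ⟨n / 3, n % 3, Nat.mod_lt _ (by norm_num), (Nat.div_add_mod n 3).symm⟩
  obtain ⟨τ, hτ, htie, hcyc⟩ := exists_blocks hr m le_rfl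
  simp only [Nat.sub_self, Nat.zero_le, true_implies] at htie hcyc
  refine ⟨fun p => letter τ p, stdPerm hr τ hτ, fun p q => ?_, ?_, fun p hp => ?_⟩
  · rw [Fin.lt_def, Fin.lt_def, stdPerm_val, stdPerm_val]
    exact stdVal_lt_iff hr hτ p.isLt q.isLt
  -- Every position `p > 0` shares a cycle with a smaller one. In a full block, the position of the
  -- letter `0` is sent to `p / 3`. The tail `3 * m`, `3 * m + 1` carries the letters `0`, `1` and
  -- is sent to `m`, `2 * m + 1`; this is where the case `m = 0`, `r = 2` has to be excluded.
  · have hdesc : ∀ p : Fin (3 * m + r), 0 < p.val → ∃ q, q < p ∧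
        (stdPerm hr τ hτ).SameCycle p q := by
      intro p hp
      by_cases hpm : p.val / 3 < m
      · obtain ⟨t, ht⟩ := (τ (p.val / 3)).surjective 0
        let p' : Fin (3 * m + r) := ⟨3 * (p.val / 3) + t, by omega⟩
        have hval : (stdPerm hr τ hτ p').val = p.val / 3 := by
          rw [stdPerm_val, stdVal, letter_block, ht]
          simp only [Fin.val_zero, p']
          omega
        refine ⟨stdPerm hr τ hτ p', Fin.lt_def.2 (by omega), ?_⟩
        rw [Perm.sameCycle_apply_right]
        exact hcyc p p' (by simp only [p']; omega) hpm
      · refine ⟨stdPerm hr τ hτ p, ?_, ?_⟩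
        · have h3 : p.val / 3 = m := by omega
          rw [Fin.lt_def, stdPerm_val, stdVal, letter_tail hτ h3]
          have : p.val % 3 = 0 ∨ p.val % 3 = 1 := by omega
          rcases this with h | h <;> rw [h] <;> omega
        · rw [Perm.sameCycle_apply_right]
    have hzero : ∀ p, (stdPerm hr τ hτ).SameCycle p ⟨0, hn⟩ := by
      intro p
      induction p using WellFoundedLT.induction with
      | ind p ih =>
        rcases Nat.eq_zero_or_pos p.val with h | h
        · rw [show p = ⟨0, hn⟩ from Fin.ext h]
        · obtain ⟨q, hq, hpq⟩ := hdesc p h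
          exact hpq.trans (ih q hq)
    exact fun x y => (hzero x).trans (hzero y).symm
  · simp only
    intro h
    by_cases hdiv : p / 3 = (p + 1) / 3
    · have := eq_of_letter_eq h hdiv
      omega
    · obtain ⟨i, rfl⟩ : ∃ i, p = 3 * i + 2 := ⟨p / 3, by omega⟩
      refine htie i (by omega) ?_
      have h1 := letter_block τ i 2
      have h2 := letter_block τ (i + 1) 0
      simp only [Fin.val_two, Fin.val_zero] at h1 h2
      rw [← h1, ← h2]
      exact h

theorem stmt0 (n k : ℕ) (hn : 0 < n) (hk : 3 ≤ k) :
    ∃ w : Fin n → Fin k, Unclustered (bwt w) := by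
  obtain ⟨v, π, hstd, hcyc, hv⟩ := exists_cyclic_word n hn
  obtain ⟨w, hw⟩ := exists_bwt_eq hn (fun p => Fin.castLE hk (v p)) π
    (fun i j => by
      rw [hstd i j, Fin.castLE_lt_castLE_iff, (Fin.castLE_injective hk).eq_iff]) hcyc
  refine ⟨w, fun i h => ?_⟩
  rw [hw]
  exact fun h' => hv i h (Fin.castLE_injective hk h')
end

section
/- For every integer n > 0 and every integer k ≥ 3, there exists a (standard) de Bruijn word of order n over Σ_k (a necklace of length k^n) having completely unclustered Burrows–Wheeler transform. -/
/-! ### Merging cycles by a transposition -/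

open Equiv.Perm in
/-- Composing with the transposition of two points in different cycles puts these
points in a common cycle and keeps together any two points that shared a cycle. -/
lemma sameCycle_mul_swap {α : Type*} [DecidableEq α] [Finite α] (f : Equiv.Perm α) (x y : α)
    (h : ¬ SameCycle f x y) :
    SameCycle (f * Equiv.swap x y) x y ∧
      ∀ a b, SameCycle f a b → SameCycle (f * Equiv.swap x y) a b := by
  set g := f * Equiv.swap x y with hg
  have hstep : ∀ a, SameCycle g a (g a) := fun a => ⟨1, by simp⟩
  have gx : g x = f y := by simp [hg]
  have gy : g y = f x := by simp [hg]
  have gne : ∀ a, a ≠ x → a ≠ y → g a = f a := fun a h1 h2 => by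
    simp [hg, Equiv.swap_apply_of_ne_of_ne h1 h2]
  -- `g` sends `x` to `f y`, and then follows the `f`-cycle of `y` until it reaches `y`.
  have key : ∀ i : ℕ, SameCycle g x y ∨ SameCycle g x ((f ^ (i + 1)) y) := by
    intro i
    induction i with
    | zero => right; simpa [gx] using hstep x
    | succ i ih =>
      rcases ih with ih | ih
      · exact Or.inl ih
      · by_cases hy : (f ^ (i + 1)) y = y
        · left; rwa [hy] at ih
        · right
          have hx : (f ^ (i + 1)) y ≠ x := fun e => h (SameCycle.symm ⟨(i + 1 : ℕ), by
            rw [zpow_natCast]; exact e⟩)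
          have := hstep ((f ^ (i + 1)) y)
          rw [gne _ hx hy] at this
          rw [pow_succ' f (i + 1), Equiv.Perm.mul_apply]
          exact ih.trans this
  have hxy : SameCycle g x y := by
    rcases key (orderOf f - 1) with h1 | h1
    · exact h1
    · rwa [Nat.sub_add_cancel (orderOf_pos f), pow_orderOf_eq_one] at h1
  refine ⟨hxy, ?_⟩
  have hf : ∀ a, SameCycle g a (f a) := by
    intro a
    by_cases hax : a = x
    · subst hax
      exact hxy.trans (gy ▸ hstep y)
    · by_cases hay : a = y
      · subst hay
        exact hxy.symm.trans (gx ▸ hstep x)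
      · exact gne a hax hay ▸ hstep a
  have hpow : ∀ (i : ℕ) a, SameCycle g a ((f ^ i) a) := by
    intro i
    induction i with
    | zero => intro a; exact SameCycle.refl _ _
    | succ i ih =>
      intro a
      rw [pow_succ', Equiv.Perm.mul_apply]
      exact (ih a).trans (hf _)
  intro a b hab
  obtain ⟨i, hi⟩ := hab.exists_nat_pow_eq
  exact hi ▸ hpow i a

/-! ### Predecessor permutations -/

/-- Words of length `m + 1` over an alphabet with `K + 3` letters. -/
abbrev Wd (K m : ℕ) := Fin (m + 1) → Fin (K + 3)

/-- The base permutation `u·b ↦ (b+1)·u`, with `b+1` taken modulo the size of the alphabet. -/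
def basePerm (K m : ℕ) : Equiv.Perm (Wd K m) where
  toFun x := Fin.cons (x (Fin.last m) + 1) (Fin.init x)
  invFun y := Fin.snoc (Fin.tail y) (y 0 - 1)
  left_inv x := by simp
  right_inv y := by simp

/-- Properties of a predecessor permutation `G` ensuring that the transform has no two equal
consecutive letters.  The condition on words ending with `1` makes them stable under
composition with the transposition of `u·0` and `u·1`. -/
structure Good {K m : ℕ} (G : Equiv.Perm (Wd K m)) : Prop where
  tail : ∀ x, Fin.tail (G x) = Fin.init x
  last : ∀ x, x (Fin.last m) = Fin.last (K + 2) → G x 0 = 0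
  low : ∀ x, x (Fin.last m) = 0 ∨ x (Fin.last m) = 1 → G x 0 ≠ 0

lemma good_base (K m : ℕ) : Good (basePerm K m) where
  tail x := by simp [basePerm]
  last x hx := by simp [basePerm, hx]
  low x hx := by
    rcases hx with hx | hx <;> simp only [basePerm, Equiv.coe_fn_mk, Fin.cons_zero, hx, ne_eq,
      Fin.ext_iff, Fin.val_add] <;> simp [Nat.mod_eq_of_lt]

lemma Good.mul_swap {K m : ℕ} {G : Equiv.Perm (Wd K m)} (h : Good G) (u : Fin m → Fin (K + 3)) :
    Good (G * Equiv.swap (Fin.snoc u 0 : Wd K m) (Fin.snoc u 1)) := by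
  have h2 : (1 : Fin (K + 3)) ≠ Fin.last (K + 2) := by
    simp [Fin.ext_iff]
  have h3 : (0 : Fin (K + 3)) ≠ Fin.last (K + 2) := by
    simp [Fin.ext_iff]
  have e0 : (Equiv.swap (Fin.snoc u 0 : Wd K m) (Fin.snoc u 1)) (Fin.snoc u 0) = Fin.snoc u 1 :=
    Equiv.swap_apply_left _ _
  have e1 : (Equiv.swap (Fin.snoc u 0 : Wd K m) (Fin.snoc u 1)) (Fin.snoc u 1) = Fin.snoc u 0 :=
    Equiv.swap_apply_right _ _
  have hc : ∀ x : Wd K m, x = Fin.snoc u 0 ∨ x = Fin.snoc u 1 ∨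
      Equiv.swap (Fin.snoc u 0 : Wd K m) (Fin.snoc u 1) x = x := by
    intro x
    by_cases h0 : x = Fin.snoc u 0
    · exact Or.inl h0
    · by_cases h1 : x = Fin.snoc u 1
      · exact Or.inr (Or.inl h1)
      · exact Or.inr (Or.inr (Equiv.swap_apply_of_ne_of_ne h0 h1))
  constructor
  · intro x
    rw [Equiv.Perm.mul_apply, h.tail]
    rcases hc x with rfl | rfl | hx
    · rw [e0]; simp
    · rw [e1]; simp
    · rw [hx]
  · intro x hl
    rw [Equiv.Perm.mul_apply]
    rcases hc x with rfl | rfl | hx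
    · simp [h3] at hl
    · simp [h2] at hl
    · rw [hx]; exact h.last x hl
  · intro x hl
    rw [Equiv.Perm.mul_apply]
    rcases hc x with rfl | rfl | hx
    · rw [e0]; exact h.low _ (by simp)
    · rw [e1]; exact h.low _ (by simp)
    · rw [hx]; exact h.low x hl

open Equiv.Perm in
/-- Greedy merging of the cycles of the base permutation. -/
lemma exists_merged (K m : ℕ) : ∃ G : Equiv.Perm (Wd K m), Good G ∧
    (∀ a b, SameCycle (basePerm K m) a b → SameCycle G a b) ∧
    ∀ u : Fin m → Fin (K + 3), SameCycle G (Fin.snoc u 0 : Wd K m) (Fin.snoc u 1) := by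
  suffices H : ∀ S : Finset (Fin m → Fin (K + 3)), ∃ G : Equiv.Perm (Wd K m), Good G ∧
      (∀ a b, SameCycle (basePerm K m) a b → SameCycle G a b) ∧
      ∀ u ∈ S, SameCycle G (Fin.snoc u 0 : Wd K m) (Fin.snoc u 1) by
    obtain ⟨G, h1, h2, h3⟩ := H Finset.univ
    exact ⟨G, h1, h2, fun u => h3 u (Finset.mem_univ u)⟩
  intro S
  induction S using Finset.induction_on with
  | empty => exact ⟨basePerm K m, good_base K m, fun _ _ h => h, by simp⟩
  | insert u S _ ih =>
    obtain ⟨G, h1, h2, h3⟩ := ih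
    by_cases hu : SameCycle G (Fin.snoc u 0 : Wd K m) (Fin.snoc u 1)
    · refine ⟨G, h1, h2, fun v hv => ?_⟩
      rcases Finset.mem_insert.1 hv with rfl | hv
      · exact hu
      · exact h3 v hv
    · obtain ⟨h4, h5⟩ := sameCycle_mul_swap G _ _ hu
      refine ⟨_, h1.mul_swap u, fun a b h => h5 a b (h2 a b h), fun v hv => ?_⟩
      rcases Finset.mem_insert.1 hv with rfl | hv
      · exact h4
      · exact h5 _ _ (h3 v hv)

/-! ### Transitivity -/

/-- The infinite sequence starting with `x` and satisfying `s (t + n) = s t - 1`, `n = m + 1`,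
whose successive factors of length `n` are the iterates of `x` under `(basePerm K m)⁻¹`. -/
def extSeq {K m : ℕ} (x : Wd K m) (t : ℕ) : Fin (K + 3) :=
  x ⟨t % (m + 1), Nat.mod_lt _ (Nat.succ_pos m)⟩ - (t / (m + 1)) • (1 : Fin (K + 3))

lemma extSeq_add {K m : ℕ} (x : Wd K m) (t : ℕ) : extSeq x (t + (m + 1)) = extSeq x t - 1 := by
  simp only [extSeq, Nat.add_mod_right, Nat.add_div_right _ (Nat.succ_pos m), succ_nsmul]
  abel

lemma extSeq_lt {K m : ℕ} (x : Wd K m) (i : Fin (m + 1)) : extSeq x i = x i := by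
  simp [extSeq, Nat.mod_eq_of_lt i.isLt, Nat.div_eq_of_lt i.isLt]

lemma iter_base {K m : ℕ} (x : Wd K m) (j : ℕ) (i : Fin (m + 1)) :
    (((basePerm K m)⁻¹ ^ j) x) i = extSeq x (i + j) := by
  induction j generalizing i with
  | zero => simp [extSeq_lt]
  | succ j ih =>
    rw [pow_succ', Equiv.Perm.mul_apply]
    change (Fin.snoc (Fin.tail (((basePerm K m)⁻¹ ^ j) x)) ((((basePerm K m)⁻¹ ^ j) x) 0 - 1) :
      Wd K m) i = _
    refine Fin.lastCases ?_ (fun i => ?_) i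
    · rw [Fin.snoc_last, ih, Fin.val_last, ← extSeq_add]
      congr 1
      simp; omega
    · rw [Fin.snoc_castSucc, Fin.tail, ih]
      congr 1
      simp; omega

/-- An equivalence relation on words containing the orbits of the base permutation and the pairs
`(u·0, u·1)` is total. -/
lemma connected {K m : ℕ} (R : Wd K m → Wd K m → Prop) (hR : Equivalence R)
    (hB : ∀ a b, Equiv.Perm.SameCycle (basePerm K m) a b → R a b)
    (h01 : ∀ u : Fin m → Fin (K + 3), R (Fin.snoc u 0 : Wd K m) (Fin.snoc u 1))
    (x y : Wd K m) : R x y := by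
  have hT : ∀ (j : ℕ) x, R x (((basePerm K m)⁻¹ ^ j) x) := fun j x =>
    hB _ _ ⟨-j, by simp⟩
  have hsub : ∀ x : Wd K m, R x (fun i => x i - 1) := by
    intro x
    have h := hT (m + 1) x
    have e : ((basePerm K m)⁻¹ ^ (m + 1)) x = fun i => x i - 1 := by
      funext i
      rw [iter_base, extSeq_add, extSeq_lt]
    rwa [e] at h
  have hshift : ∀ (c : ℕ) (x : Wd K m), R x (fun i => x i - c • (1 : Fin (K + 3))) := by
    intro c
    induction c with
    | zero => intro x; simpa using hR.refl x
    | succ c ih =>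
      intro x
      refine hR.trans (ih x) ?_
      convert hsub _ using 2
      rw [succ_nsmul]; abel
  have hnext : ∀ (u : Fin m → Fin (K + 3)) (b : ℕ), R (Fin.snoc u (b • (1 : Fin (K + 3))) : Wd K m)
      (Fin.snoc u ((b + 1) • (1 : Fin (K + 3)))) := by
    intro u b
    have h1 := hshift b (Fin.snoc u (b • (1 : Fin (K + 3))))
    have h2 := hshift b (Fin.snoc u ((b + 1) • (1 : Fin (K + 3))))
    have h3 := h01 (fun i => u i - b • (1 : Fin (K + 3)))
    have e1 : (fun i => (Fin.snoc u (b • (1 : Fin (K + 3))) : Wd K m) i - b • (1 : Fin (K + 3)))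
        = (Fin.snoc (fun i => u i - b • (1 : Fin (K + 3))) 0 : Wd K m) := by
      funext i
      refine Fin.lastCases ?_ (fun i => ?_) i <;> simp
    have e2 : (fun i => (Fin.snoc u ((b + 1) • (1 : Fin (K + 3))) : Wd K m) i -
          b • (1 : Fin (K + 3)))
        = (Fin.snoc (fun i => u i - b • (1 : Fin (K + 3))) 1 : Wd K m) := by
      funext i
      refine Fin.lastCases ?_ (fun i => ?_) i
      · simp only [Fin.snoc_last, succ_nsmul]; abel
      · simp
    rw [e1] at h1
    rw [e2] at h2
    exact hR.trans h1 (hR.trans h3 (hR.symm h2))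
  have hzero : ∀ (u : Fin m → Fin (K + 3)) (b : ℕ), R (Fin.snoc u 0 : Wd K m)
      (Fin.snoc u (b • (1 : Fin (K + 3)))) := by
    intro u b
    induction b with
    | zero => simpa using hR.refl _
    | succ b ih => exact hR.trans ih (hnext u b)
  have hzero' : ∀ (u : Fin m → Fin (K + 3)) (b : Fin (K + 3)), R (Fin.snoc u 0 : Wd K m)
      (Fin.snoc u b) := by
    intro u b
    have h := hzero u b.val
    have e : b.val • (1 : Fin (K + 3)) = b := by
      have hv : ∀ c : ℕ, (c • (1 : Fin (K + 3))).val = c % (K + 3) := by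
        intro c
        induction c with
        | zero => simp
        | succ c ih => rw [succ_nsmul, Fin.val_add, ih]; simp
      exact Fin.ext (by rw [hv, Nat.mod_eq_of_lt b.isLt])
    rwa [e] at h
  have hlast : ∀ x y : Wd K m, Fin.init x = Fin.init y → R x y := by
    intro x y h
    rw [← Fin.snoc_init_self x, ← Fin.snoc_init_self y, h]
    exact hR.trans (hR.symm (hzero' _ _)) (hzero' _ _)
  have hupd : ∀ (x : Wd K m) (i : Fin (m + 1)) (c : Fin (K + 3)),
      R x (Function.update x i c) := by
    intro x i c
    -- After `i + 1` steps the letter at position `i` has moved to the last position.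
    refine hR.trans (hT (i + 1) x) (hR.trans (hlast _ _ ?_) (hR.symm (hT (i + 1) _)))
    funext p
    simp only [Fin.init, iter_base, extSeq]
    congr 1
    rw [Function.update_of_ne]
    intro e
    have e' := congrArg Fin.val e
    simp only [Fin.val_castSucc] at e'
    have hp := p.isLt
    have hi := i.isLt
    rcases Nat.lt_or_ge (p.val + (i.val + 1)) (m + 1) with hlt | hge
    · rw [Nat.mod_eq_of_lt hlt] at e'; omega
    · rw [Nat.mod_eq_sub_mod hge, Nat.mod_eq_of_lt (by omega)] at e'; omega
  have hpw : ∀ S : Finset (Fin (m + 1)), R x (S.piecewise y x) := by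
    intro S
    induction S using Finset.induction_on with
    | empty => simpa using hR.refl x
    | insert i S _ ih =>
      rw [Finset.piecewise_insert]
      exact hR.trans ih (hupd _ _ _)
  simpa using hpw Finset.univ

/-! ### Lexicographic order and sorted rotations -/

/-- If `x < y` lexicographically, no word lies strictly between them, and their prefixes
of length `m` differ, then `x` ends with the largest letter and `y` with `0`. -/
lemma covering {K m : ℕ} (x y : Wd K m) (hxy : toLex x < toLex y)
    (hcov : ∀ z : Wd K m, ¬ (toLex x < toLex z ∧ toLex z < toLex y))
    (hne : Fin.init x ≠ Fin.init y) :
    x (Fin.last m) = Fin.last (K + 2) ∧ y (Fin.last m) = 0 := by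
  obtain ⟨i, hi, hlt⟩ := hxy
  change ∀ j, j < i → x j = y j at hi
  change x i < y i at hlt
  have hil : i < Fin.last m := by
    rw [Fin.lt_last_iff_ne_last]
    rintro rfl
    exact hne (funext fun p => hi _ (Fin.castSucc_lt_last p))
  constructor
  · by_contra hx
    refine hcov (Function.update x (Fin.last m) (Fin.last (K + 2)))
      ⟨⟨Fin.last m, ?_, ?_⟩, ⟨i, ?_, ?_⟩⟩
    · intro j hj
      change x j = Function.update x _ _ j
      rw [Function.update_of_ne hj.ne]
    · change x _ < Function.update x _ _ _
      rw [Function.update_self]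
      exact Fin.lt_last_iff_ne_last.2 hx
    · intro j hj
      change Function.update x _ _ j = y j
      rw [Function.update_of_ne (hj.trans hil).ne]
      exact hi j hj
    · change Function.update x _ _ i < y i
      rwa [Function.update_of_ne hil.ne]
  · by_contra hy
    refine hcov (Function.update y (Fin.last m) 0) ⟨⟨i, ?_, ?_⟩, ⟨Fin.last m, ?_, ?_⟩⟩
    · intro j hj
      change x j = Function.update y _ _ j
      rw [Function.update_of_ne (hj.trans hil).ne]
      exact hi j hj
    · change x i < Function.update y _ _ i
      rwa [Function.update_of_ne hil.ne]
    · intro j hj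
      change Function.update y _ _ j = y j
      rw [Function.update_of_ne hj.ne]
    · change Function.update y _ _ _ < y _
      rw [Function.update_self]
      exact Fin.pos_iff_ne_zero.2 hy

lemma lexLe_iff {n k : ℕ} (f g : Fin n → Fin k) : LexLe f g ↔ toLex f ≤ toLex g := by
  rw [le_iff_eq_or_lt]
  exact Iff.rfl

lemma sortedRot_pairwise {n k : ℕ} (w : Fin n → Fin k) :
    (sortedRot w).Pairwise fun a b => toLex (rotl w a) ≤ toLex (rotl w b) := by
  have h := List.pairwise_mergeSort
    (le := fun a b : Fin n => decide (LexLe (rotl w a) (rotl w b)))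
    (fun a b c h1 h2 => by
      simp only [decide_eq_true_eq, lexLe_iff] at *
      exact h1.trans h2)
    (fun a b => by
      simp only [Bool.or_eq_true, decide_eq_true_eq, lexLe_iff]
      exact le_total _ _) (List.finRange n)
  refine h.imp ?_
  intro a b hab
  simpa only [decide_eq_true_eq, lexLe_iff] using hab

/-! ### From permutations to de Bruijn words -/

/-- A good transitive predecessor permutation yields a de Bruijn word with completely unclustered
transform: the word reads the first letters along the orbit. -/
lemma word_of_good {K m : ℕ} (G : Equiv.Perm (Wd K m)) (hG : Good G)
    (hc : ∀ x y, Equiv.Perm.SameCycle G x y) :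
    ∃ w : Fin ((K + 3) ^ (m + 1)) → Fin (K + 3),
      IsDeBruijn (K + 3) (m + 1) w ∧ Unclustered (bwt w) := by
  classical
  set N := (K + 3) ^ (m + 1) with hN
  have hcard : Fintype.card (Wd K m) = N := by simp [hN]
  have hmN : m + 1 < N := Nat.lt_pow_self (by omega)
  have hcyc : (G⁻¹).IsCycleOn ((Finset.univ : Finset (Wd K m)) : Set (Wd K m)) := by
    refine ⟨by simp, fun x _ y _ => (hc x y).inv⟩
  let s : ℕ → Wd K m := fun t => ((G⁻¹) ^ t) 0
  have hs_succ : ∀ t, G (s (t + 1)) = s t := by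
    intro t
    change G (((G⁻¹) ^ (t + 1)) 0) = _
    rw [pow_succ', Equiv.Perm.mul_apply]
    exact Equiv.apply_symm_apply G _
  have hper : ∀ t, s (t + N) = s t := by
    intro t
    have h := hcyc.pow_card_apply (a := (0 : Wd K m)) (Finset.mem_univ _)
    rw [Finset.card_univ, hcard] at h
    simp only [s, pow_add, Equiv.Perm.mul_apply, h]
  have hmod : ∀ t, s (t % N) = s t := fun t => (show Function.Periodic s N from hper).map_mod_nat t
  have hshift : ∀ (i t : ℕ) (hi : i < m + 1), s (t + i) 0 = s t ⟨i, hi⟩ := by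
    intro i
    induction i with
    | zero => intro t hi; rfl
    | succ i ih =>
      intro t hi
      have h1 := ih (t + 1) (by omega)
      have h2 := congrFun (hG.tail (s (t + 1))) ⟨i, by omega⟩
      rw [hs_succ] at h2
      rw [show t + (i + 1) = t + 1 + i by omega, h1]
      exact h2.symm
  have hsurj : Function.Surjective fun p : Fin N => s p := by
    intro x
    obtain ⟨t, ht, h⟩ := hcyc.exists_pow_eq (a := (0 : Wd K m)) (b := x)
      (Finset.mem_univ _) (Finset.mem_univ _)
    rw [Finset.card_univ, hcard] at ht
    exact ⟨⟨t, ht⟩, h⟩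
  have hbij : Function.Bijective fun p : Fin N => s p :=
    (Fintype.bijective_iff_surjective_and_card _).2 ⟨hsurj, by simp [hN]⟩
  refine ⟨fun p => s p 0, ?_, ?_⟩
  · have hfac : ∀ p : Fin N, circFactor (fun p : Fin N => s p 0) p (m + 1) = s p := by
      intro p
      funext t
      change s ((p.val + t.val) % N) 0 = _
      rw [hmod, hshift _ _ t.isLt]
    intro f
    obtain ⟨p, hp, hu⟩ := hbij.existsUnique f
    exact ⟨p, (hfac p).trans hp, fun q hq => hu q ((hfac q).symm.trans hq)⟩
  · set w : Fin N → Fin (K + 3) := fun p => s p 0 with hw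
    have hrot : ∀ (j : Fin N) (i : Fin N), rotl w j i = s (j.val + i.val) 0 := by
      intro j i
      change s ((i + j : Fin N)).val 0 = _
      rw [Fin.val_add, hmod, add_comm i.val]
    -- Words of length `m + 1` being distinct, they determine the order of the rotations.
    have hmono : ∀ a b : Fin N, toLex (s a) < toLex (s b) →
        toLex (rotl w a) < toLex (rotl w b) := by
      rintro a b ⟨i, hi, hlt⟩
      refine ⟨⟨i.val, by omega⟩, ?_, ?_⟩
      · intro j hj
        have hj' : j.val < i.val := hj
        change rotl w a j = rotl w b j
        rw [hrot, hrot, hshift _ _ (by omega), hshift _ _ (by omega)]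
        exact hi ⟨j.val, by omega⟩ hj
      · change rotl w a _ < rotl w b _
        rw [hrot, hrot, hshift _ _ i.isLt, hshift _ _ i.isLt]
        exact hlt
    have hle : ∀ a b : Fin N, toLex (rotl w a) ≤ toLex (rotl w b) →
        toLex (s a) ≤ toLex (s b) := by
      intro a b h
      by_contra h'
      exact absurd h (not_le.2 (hmono b a (not_le.1 h')))
    have hlen := length_sortedRot w
    have hpair := List.pairwise_iff_getElem.1 (sortedRot_pairwise w)
    have hperm : (sortedRot w).Perm (List.finRange N) := List.mergeSort_perm _ _
    have hnodup : (sortedRot w).Nodup := hperm.nodup_iff.2 (List.nodup_finRange N)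
    have hbwt : ∀ (i : ℕ) (hi : i < N), bwt w ⟨i, hi⟩ =
        G (s ((sortedRot w)[i]'(by rw [hlen]; exact hi)).val) 0 := by
      intro i hi
      change s ((_ + (N - 1)) % N) 0 = _
      rw [hmod, ← hs_succ, add_assoc, Nat.sub_add_cancel (by omega), hper]
    intro i hi
    rw [hbwt, hbwt]
    have hi0 : i < (sortedRot w).length := by omega
    have hi1 : i + 1 < (sortedRot w).length := by omega
    set a := (sortedRot w)[i] with ha
    set b := (sortedRot w)[i + 1] with hb
    have hab : a ≠ b := by
      intro e
      have := (hnodup.getElem_inj_iff).1 e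
      omega
    have hsab : s a ≠ s b := fun e => hab (hbij.1 e)
    intro heq
    by_cases hinit : Fin.init (s a) = Fin.init (s b)
    · apply hsab
      apply G.injective
      rw [← Fin.cons_self_tail (G (s a)), ← Fin.cons_self_tail (G (s b)), heq, hG.tail, hG.tail,
        hinit]
    · have hlt : toLex (s a) < toLex (s b) :=
        lt_of_le_of_ne (hle _ _ (hpair i (i + 1) hi0 hi1 (by omega)))
          (fun e => hsab (toLex.injective e))
      obtain ⟨h1, h2⟩ := covering (s a) (s b) hlt (fun z hz => by
        obtain ⟨c, rfl⟩ := hsurj z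
        obtain ⟨t, ht, hct⟩ := List.getElem_of_mem (hperm.mem_iff.2 (List.mem_finRange c))
        rcases lt_trichotomy t i with h | rfl | h
        · exact absurd hz.1 (not_lt.2 (hle _ _ (hct ▸ hpair t i ht hi0 h)))
        · exact absurd hz.1 (by simp only [← hct]; exact lt_irrefl _)
        · rcases Nat.lt_or_ge (i + 1) t with h' | h'
          · exact absurd hz.2 (not_lt.2 (hle _ _ (hct ▸ hpair (i + 1) t hi1 ht h')))
          · obtain rfl : t = i + 1 := by omega
            exact absurd hz.2 (by simp only [← hct]; exact lt_irrefl _)) hinit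
      rw [hG.last _ h1] at heq
      exact hG.low _ (Or.inl h2) heq.symm

theorem stmt2 (n k : ℕ) (hn : 0 < n) (hk : 3 ≤ k) :
    ∃ w : Fin (k ^ n) → Fin k, IsDeBruijn k n w ∧ Unclustered (bwt w) := by
  obtain ⟨K, rfl⟩ := Nat.exists_eq_add_of_le' hk
  obtain ⟨m, rfl⟩ := Nat.exists_eq_add_of_le' hn
  obtain ⟨G, h1, h2, h3⟩ := exists_merged K m
  exact word_of_good G h1 (connected _
    ⟨Equiv.Perm.SameCycle.refl G, fun h => h.symm, fun h h' => h.trans h'⟩ h2 h3)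
end

section
/- A word w of length n over Σ_k is the Burrows–Wheeler transform of some aperiodic necklace if and only if the standard permutation π_w is a single cycle of length n. -/
/-- The rotation of `u` starting at `j`, in the lexicographic linear order on words. -/
def rotWord {n k : ℕ} (u : Fin n → Fin k) (j : Fin n) : Lex (Fin n → Fin k) :=
  toLex (rotl u j)

lemma rotWord_lt_iff {n k : ℕ} (u : Fin n → Fin k) (a b : Fin n) :
    rotWord u a < rotWord u b ↔
      ∃ i : Fin n, (∀ j : Fin n, j < i → u (j + a) = u (j + b)) ∧ u (i + a) < u (i + b) :=
  Iff.rfl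

lemma lexLe_iff_s4 {n k : ℕ} (u : Fin n → Fin k) (a b : Fin n) :
    LexLe (rotl u a) (rotl u b) ↔ rotWord u a ≤ rotWord u b := by
  rw [le_iff_eq_or_lt]
  exact Iff.rfl

lemma rotWord_injective {N k : ℕ} {u : Fin (N + 1) → Fin k} (hu : IsPrimitiveWord u) :
    Function.Injective (rotWord u) := by
  intro a b hab
  have h : ∀ i, u (i + a) = u (i + b) := fun i => congrFun (toLex.injective hab) i
  have h0 : (b - a).val = 0 := by
    apply hu
    funext i
    have := h (i - a)
    rw [sub_add_cancel] at this
    rw [this]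
    unfold rotl
    congr 1
    abel
  have h1 : b - a = 0 := Fin.ext h0
  exact (sub_eq_zero.mp h1).symm

/-- Prepending a letter: the rotations at `a`, `b` are those at `a + 1`, `b + 1` with the last letter
moved to the front. -/
lemma rotWord_lt_of_step {N k : ℕ} (u : Fin (N + 1) → Fin k) (a b : Fin (N + 1))
    (h : u a < u b ∨ (u a = u b ∧ rotWord u (a + 1) < rotWord u (b + 1))) :
    rotWord u a < rotWord u b := by
  rw [rotWord_lt_iff]
  rcases h with h | ⟨h, h'⟩
  · exact ⟨0, fun j hj => absurd hj (Fin.not_lt_zero j), by simpa using h⟩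
  · obtain ⟨i, hi, hlt⟩ := (rotWord_lt_iff _ _ _).1 h'
    induction i using Fin.lastCases with
    | last =>
      -- the last letters of the rotations at `a + 1`, `b + 1` are `u a`, `u b`, which agree
      have e : ∀ c : Fin (N + 1), Fin.last N + (c + 1) = c := by
        intro c
        rw [add_comm c, ← add_assoc, Fin.last_add_one, zero_add]
      rw [e, e] at hlt
      exact absurd h hlt.ne
    | cast i =>
      have e : ∀ (i : Fin N) (c : Fin (N + 1)), i.succ + c = i.castSucc + (c + 1) := by
        intro i c
        rw [← Fin.coeSucc_eq_succ]
        abel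
      refine ⟨i.succ, fun j hj => ?_, by rw [e, e]; exact hlt⟩
      induction j using Fin.cases with
      | zero => simpa using h
      | succ j =>
        rw [e, e]
        exact hi _ (Fin.castSucc_lt_castSucc_iff.2 (Fin.succ_lt_succ_iff.1 hj))

/-- The starting position of the `m`-th rotation in ascending order. -/
def rotPos {n k : ℕ} (u : Fin n → Fin k) (m : Fin n) : Fin n :=
  (sortedRot u)[m.val]'(by rw [length_sortedRot]; exact m.isLt)

lemma rotPos_bijective {n k : ℕ} (u : Fin n → Fin k) : Function.Bijective (rotPos u) := by
  rw [← Finite.injective_iff_bijective]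
  intro a b hab
  have hnd : (sortedRot u).Nodup :=
    (List.mergeSort_perm _ _).nodup_iff.2 (List.nodup_finRange n)
  exact Fin.ext ((hnd.getElem_inj_iff).1 hab)

lemma rotPos_strictMono {N k : ℕ} {u : Fin (N + 1) → Fin k} (hu : IsPrimitiveWord u) :
    StrictMono (fun m => rotWord u (rotPos u m)) := by
  have hp : (sortedRot u).Pairwise fun a b => decide (LexLe (rotl u a) (rotl u b)) = true := by
    apply List.pairwise_mergeSort
    · intro a b c hab hbc
      simp only [decide_eq_true_eq, lexLe_iff_s4] at *
      exact hab.trans hbc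
    · intro a b
      simp only [Bool.or_eq_true, decide_eq_true_eq, lexLe_iff_s4]
      exact le_total _ _
  intro a b hab
  have h := List.pairwise_iff_getElem.1 hp a.val b.val (by rw [length_sortedRot]; exact a.isLt)
    (by rw [length_sortedRot]; exact b.isLt) hab
  rw [decide_eq_true_eq, lexLe_iff_s4] at h
  refine lt_of_le_of_ne h fun he => ?_
  exact hab.ne ((rotPos_bijective u).1 (rotWord_injective hu he))

/-- Two bijections of `Fin n` that both make `f` strictly increasing are equal: they enumerate the
range of `f` in ascending order. -/
lemma eq_of_strictMono_comp {n : ℕ} {α : Type*} [LinearOrder α] (f : Fin n → α)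
    (s t : Fin n → Fin n) (hs : Function.Bijective s) (ht : Function.Bijective t)
    (hfs : StrictMono (f ∘ s)) (hft : StrictMono (f ∘ t)) : s = t := by
  have key : ∀ g : Fin n → Fin n, Function.Bijective g → Set.range (f ∘ g) = Set.range f :=
    fun g hg => hg.2.range_comp f
  have h := (StrictMono.range_inj hfs hft).1 ((key s hs).trans (key t ht).symm)
  have hf : Function.Injective f := by
    intro a b hab
    obtain ⟨a, rfl⟩ := hs.2 a
    obtain ⟨b, rfl⟩ := hs.2 b
    rw [hfs.injective hab]
  exact funext fun i => hf (congrFun h i)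

lemma strictMono_rotWord_iff {N k : ℕ} {u : Fin (N + 1) → Fin k} (hu : IsPrimitiveWord u)
    (t : Fin (N + 1) → Fin (N + 1)) (ht : Function.Bijective t) :
    StrictMono (rotWord u ∘ t) ↔ t = rotPos u := by
  constructor
  · intro h
    exact eq_of_strictMono_comp _ _ _ ht (rotPos_bijective u) h (rotPos_strictMono hu)
  · rintro rfl
    exact rotPos_strictMono hu

lemma bwt_eq {N k : ℕ} (u : Fin (N + 1) → Fin k) (m : Fin (N + 1)) :
    bwt u m = u (rotPos u m - 1) := by
  have h : ∀ j : Fin (N + 1),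
      (⟨(j.val + (N + 1 - 1)) % (N + 1), Nat.mod_lt _ j.pos⟩ : Fin (N + 1)) = j - 1 := by
    intro j
    rw [eq_sub_iff_add_eq]
    ext
    rw [Fin.val_add, Fin.val_one', ← Nat.add_mod]
    simp [add_assoc, Nat.mod_eq_of_lt j.isLt]
  exact congrArg u (h _)

/-- The standard permutation is determined by the word. -/
lemma isStdPerm_unique {n k : ℕ} {w : Fin n → Fin k} {π τ : Equiv.Perm (Fin n)}
    (hπ : IsStdPerm w π) (hτ : IsStdPerm w τ) : π = τ := by
  have h1 : StrictMono (π ∘ ⇑π⁻¹) := fun a b h => by simpa using h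
  have h2 : StrictMono (π ∘ ⇑τ⁻¹) := fun a b h => by
    rw [Function.comp, Function.comp, hπ, ← hτ]
    simpa using h
  have := eq_of_strictMono_comp π _ _ (π⁻¹).bijective (τ⁻¹).bijective h1 h2
  exact inv_injective (DFunLike.coe_injective this)

/-- The standard permutation of `bwt u` moves each rotation to the one starting one position
earlier. -/
lemma rotPos_stdPerm {N k : ℕ} {u : Fin (N + 1) → Fin k} (hu : IsPrimitiveWord u)
    {π : Equiv.Perm (Fin (N + 1))} (hπ : IsStdPerm (bwt u) π) (x : Fin (N + 1)) :
    rotPos u (π x) = rotPos u x - 1 := by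
  let s : Equiv.Perm (Fin (N + 1)) := Equiv.ofBijective _ (rotPos_bijective u)
  let τ : Equiv.Perm (Fin (N + 1)) := (s.trans (Equiv.subRight 1)).trans s.symm
  have hsτ : ∀ x, rotPos u (τ x) = rotPos u x - 1 := fun x => s.apply_symm_apply _
  have hmono := rotPos_strictMono hu
  have hlt : ∀ a b, (bwt u a < bwt u b ∨ (bwt u a = bwt u b ∧ a < b)) → τ a < τ b := by
    intro a b h
    rw [← hmono.lt_iff_lt]
    simp only [hsτ]
    apply rotWord_lt_of_step
    rw [sub_add_cancel, sub_add_cancel, ← bwt_eq u, ← bwt_eq u]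
    exact h.imp_right fun h => ⟨h.1, hmono h.2⟩
  have hτ : IsStdPerm (bwt u) τ := by
    refine fun a b => ⟨fun h => ?_, hlt a b⟩
    -- the right-hand side is a strict total order on indices, so one implication suffices
    by_contra hc
    rcases eq_or_ne a b with rfl | hab
    · exact lt_irrefl _ h
    · refine lt_asymm h (hlt b a ?_)
      rcases lt_trichotomy (bwt u a) (bwt u b) with h1 | h1 | h1
      · exact absurd (Or.inl h1) hc
      · refine Or.inr ⟨h1.symm, lt_of_le_of_ne (not_lt.1 fun h2 => hc (Or.inr ⟨h1, h2⟩)) hab.symm⟩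
      · exact Or.inl h1
  rw [isStdPerm_unique hπ hτ]
  exact hsτ x

lemma transitive_of_bwt {N k : ℕ} {u : Fin (N + 1) → Fin k} (hu : IsPrimitiveWord u)
    {π : Equiv.Perm (Fin (N + 1))} (hπ : IsStdPerm (bwt u) π) (x y : Fin (N + 1)) :
    ∃ m : ℕ, (π ^ m) x = y := by
  have h : ∀ d : Fin (N + 1), ∃ m : ℕ, rotPos u ((π ^ m) x) = rotPos u x - d := by
    intro d
    induction d using Fin.induction with
    | zero => exact ⟨0, by simp⟩
    | succ i ih =>
      obtain ⟨m, hm⟩ := ih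
      refine ⟨m + 1, ?_⟩
      rw [pow_succ', Equiv.Perm.mul_apply, rotPos_stdPerm hu hπ, hm, ← Fin.coeSucc_eq_succ]
      abel
  obtain ⟨m, hm⟩ := h (rotPos u x - rotPos u y)
  exact ⟨m, (rotPos_bijective u).1 (by rw [hm]; abel)⟩

lemma exists_bwt_of_transitive {N k : ℕ} {w : Fin (N + 1) → Fin k}
    {π : Equiv.Perm (Fin (N + 1))} (hπ : IsStdPerm w π)
    (htrans : ∀ x y : Fin (N + 1), ∃ m : ℕ, (π ^ m) x = y) :
    ∃ u : Fin (N + 1) → Fin k, IsPrimitiveWord u ∧ bwt u = w := by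
  have hcyc : (π⁻¹).IsCycleOn ((Finset.univ : Finset (Fin (N + 1))) : Set (Fin (N + 1))) := by
    apply Equiv.Perm.IsCycleOn.inv
    refine ⟨by simp, fun x _ y _ => ?_⟩
    obtain ⟨m, hm⟩ := htrans x y
    exact ⟨m, by simpa using hm⟩
  obtain ⟨σ, rfl⟩ : ∃ σ : Equiv.Perm (Fin (N + 1)), π = σ⁻¹ := ⟨π⁻¹, (inv_inv π).symm⟩
  rw [inv_inv] at hcyc
  have hord : ∀ a b, a < b ↔ (w (σ a) < w (σ b) ∨ (w (σ a) = w (σ b) ∧ σ a < σ b)) := by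
    intro a b
    simpa using hπ (σ a) (σ b)
  have hreach : ∀ x y, ∃ i : Fin (N + 1), (σ ^ i.val) x = y := by
    intro x y
    obtain ⟨i, hi, h⟩ := hcyc.exists_pow_eq (Finset.mem_univ x) (Finset.mem_univ y)
    exact ⟨⟨i, by simpa using hi⟩, h⟩
  let q : Fin (N + 1) → Fin (N + 1) := fun j => (σ ^ j.val) 0
  have hqsurj : Function.Surjective q := hreach 0
  have hq : Function.Bijective q := Finite.surjective_iff_bijective.1 hqsurj
  have hqadd : ∀ i j : Fin (N + 1), q (i + j) = (σ ^ i.val) (q j) := by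
    intro i j
    change _ = (σ ^ i.val) ((σ ^ j.val) 0)
    rw [← Equiv.Perm.mul_apply, ← pow_add]
    refine (hcyc.pow_apply_eq_pow_apply (Finset.mem_univ _)).2 ?_
    simpa [Fin.val_add] using Nat.mod_modEq _ _
  let u : Fin (N + 1) → Fin k := fun j => w (σ (q j))
  have hlow : ∀ a b, a < b → w (σ a) ≤ w (σ b) := fun a b h =>
    ((hord a b).1 h).elim le_of_lt fun h => h.1.le
  -- as long as the letters agree, the order of the two orbits is preserved
  have horbit : ∀ (x y : Fin (N + 1)), x < y → ∀ i : ℕ,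
      (∀ j < i, w (σ ((σ ^ j) x)) = w (σ ((σ ^ j) y))) → (σ ^ i) x < (σ ^ i) y := by
    intro x y hxy i
    induction i with
    | zero => intro _; simpa using hxy
    | succ i ih =>
      intro h
      have h1 := (hord _ _).1 (ih fun j hj => h j (by omega))
      rw [pow_succ', Equiv.Perm.mul_apply, Equiv.Perm.mul_apply]
      exact (h1.resolve_left (h i (by omega)).not_lt).2
  have hrot : ∀ a b, q a < q b → rotWord u a < rotWord u b := by
    intro a b hab
    have hu : ∀ i c : Fin (N + 1), u (i + c) = w (σ ((σ ^ i.val) (q c))) := fun i c =>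
      congrArg (fun z => w (σ z)) (hqadd i c)
    rcases lt_trichotomy (rotWord u a) (rotWord u b) with h | h | h
    · exact h
    · -- equal rotations: run the orbits until the smaller one reaches the largest index
      exfalso
      obtain ⟨i, hi⟩ := hreach (q a) (Fin.last N)
      refine (Fin.le_last ((σ ^ i.val) (q b))).not_gt (hi ▸ horbit _ _ hab i.val fun j hj => ?_)
      have h2 : u (⟨j, hj.trans i.isLt⟩ + a) = u (⟨j, hj.trans i.isLt⟩ + b) :=
        congrFun (toLex.injective h) _
      rwa [hu, hu] at h2
    · exfalso
      obtain ⟨i, hi, hlt⟩ := (rotWord_lt_iff _ _ _).1 h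
      rw [hu, hu] at hlt
      refine (hlow _ _ (horbit _ _ hab i.val fun j hj => ?_)).not_gt hlt
      have h2 := hi ⟨j, hj.trans i.isLt⟩ hj
      rw [hu, hu] at h2
      exact h2.symm
  have hprim : IsPrimitiveWord u := by
    intro j hj
    by_contra hne
    have hne' : q j ≠ q 0 := fun h => hne (by rw [hq.1 h]; rfl)
    have he : rotWord u j = rotWord u 0 := by
      have h0 : rotl u 0 = u := by funext i; simp [rotl]
      exact congrArg toLex (hj.trans h0.symm)
    rcases lt_or_gt_of_ne hne' with h | h
    · exact (hrot _ _ h).ne he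
    · exact (hrot _ _ h).ne he.symm
  let e : Equiv.Perm (Fin (N + 1)) := Equiv.ofBijective q hq
  have hqe : ∀ x, q (e.symm x) = x := e.apply_symm_apply
  have hpos : ⇑e.symm = rotPos u := by
    refine (strictMono_rotWord_iff hprim _ e.symm.bijective).1 fun a b hab => hrot _ _ ?_
    rwa [hqe, hqe]
  refine ⟨u, hprim, funext fun m => ?_⟩
  rw [bwt_eq, ← hpos]
  -- `σ (q (j - 1)) = q j`
  have h1 : σ (q (e.symm m - 1)) = m := by
    rcases N with _ | N
    · exact Subsingleton.elim (α := Fin 1) _ _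
    · have := hqadd 1 (e.symm m - 1)
      rw [add_sub_cancel, hqe] at this
      simpa using this.symm
  exact congrArg w h1

theorem stmt4 (n k : ℕ) (w : Fin n → Fin k) (π : Equiv.Perm (Fin n))
    (hπ : IsStdPerm w π) :
    (∃ u : Fin n → Fin k, IsPrimitiveWord u ∧ bwt u = w) ↔
      ∀ x y : Fin n, ∃ m : ℕ, (π ^ m) x = y := by
  rcases n with _ | N
  · exact ⟨fun _ x => x.elim0, fun _ => ⟨w, fun j => j.elim0, funext fun j => j.elim0⟩⟩
  · refine ⟨?_, exists_bwt_of_transitive hπ⟩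
    rintro ⟨u, hu, rfl⟩
    exact transitive_of_bwt hu hπ
end

section
/- Let k ≥ 2 and n ≥ 1. The map φ : {0,…,n−1} × {0,…,k−1} → {0,…,kn−1} sending the edge (m, i) of DB(k,n) (i.e., the edge from m to (km+i) mod n) to the residue (km+i) mod kn is a bijection; moreover, for any two edges e₁ = (m₁, i₁) and e₂ = (m₂, i₂) of DB(k,n), the target of e₁ equals the source of e₂ (i.e., (km₁+i₁) ≡ m₂ (mod n)) if and only if there is an edge of DB(k,kn) from φ(e₁) to φ(e₂) (i.e., there exists j ∈ {0,…,k−1} with k·φ(e₁) + j ≡ φ(e₂) (mod kn)). Hence DB(k,kn) is isomorphic to the line graph of DB(k,n). -/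
lemma mul_add_mod_mul {k j : ℕ} (a n : ℕ) (hj : j < k) :
    (k * a + j) % (k * n) = k * (a % n) + j := by
  rw [Nat.mod_mul, Nat.mul_add_mod, Nat.mod_eq_of_lt hj, Nat.mul_add_div (by omega),
    Nat.div_eq_of_lt hj, Nat.add_zero, Nat.add_comm]

lemma eq_and_eq_of_mul_add_eq {k a b i j : ℕ} (hi : i < k) (hj : j < k)
    (h : k * a + i = k * b + j) : a = b ∧ i = j := by
  have hq := congrArg (· / k) h
  have hr := congrArg (· % k) h
  simp only [Nat.mul_add_div (Nat.zero_lt_of_lt hi), Nat.mul_add_mod, Nat.div_eq_of_lt hi,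
    Nat.div_eq_of_lt hj, Nat.mod_eq_of_lt hi, Nat.mod_eq_of_lt hj, Nat.add_zero] at hq hr
  exact ⟨hq, hr⟩

theorem stmt5 (k n : ℕ) (hk : 2 ≤ k) (hn : 1 ≤ n)
    (φ : Fin n × Fin k → Fin (k * n))
    (hφ : ∀ e : Fin n × Fin k, (φ e).val = (k * e.1.val + e.2.val) % (k * n)) :
    Function.Bijective φ ∧
      ∀ e₁ e₂ : Fin n × Fin k,
        ((k * e₁.1.val + e₁.2.val) % n = e₂.1.val ↔
          ∃ j < k, (k * (φ e₁).val + j) % (k * n) = (φ e₂).val) := by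
  have hv : ∀ e : Fin n × Fin k, (φ e).val = k * e.1.val + e.2.val := fun e => by
    rw [hφ, mul_add_mod_mul _ _ e.2.isLt, Nat.mod_eq_of_lt e.1.isLt]
  refine ⟨(Fintype.bijective_iff_injective_and_card φ).2 ⟨fun e₁ e₂ h => ?_, ?_⟩,
    fun e₁ e₂ => ?_⟩
  · have h' := congrArg Fin.val h
    rw [hv, hv] at h'
    obtain ⟨h1, h2⟩ := eq_and_eq_of_mul_add_eq e₁.2.isLt e₂.2.isLt h'
    exact Prod.ext (Fin.ext h1) (Fin.ext h2)
  · simp [Nat.mul_comm]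
  · rw [hv e₁, hv e₂]
    constructor
    · intro h
      exact ⟨e₂.2.val, e₂.2.isLt, by rw [mul_add_mod_mul _ _ e₂.2.isLt, h]⟩
    · rintro ⟨j, hj, h⟩
      rw [mul_add_mod_mul _ _ hj] at h
      exact (eq_and_eq_of_mul_add_eq hj e₂.2.isLt h).1
end

section
/- Let u be a generalized de Bruijn word of length kn over Σ_k, let w = BWT(u), and let σ = π_w^{−1} be the inverse standard permutation of w. Then for every i with 0 ≤ i ≤ n−2, the word w has a tie at block i if and only if there exists j ∈ {0,…,k−1} such that σ(jn+i) = ki+k−1 and σ(jn+i+1) = k(i+1). -/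
/-- Two positions of an alphabet-permutation power in the same block (`x / k = y / k`) that carry
the same letter coincide. -/
lemma IsAlphaPermPower.eq_of_block {k n : ℕ} {v : Fin (k * n) → Fin k} (hv : IsAlphaPermPower v)
    {x y : Fin (k * n)} (hb : x.val / k = y.val / k) (hxy : v x = v y) : x = y := by
  have hk : 0 < k := Nat.pos_of_mul_pos_right x.pos
  have hn : x.val / k < n := Nat.div_lt_of_lt_mul x.isLt
  have hinj := Finite.injective_iff_surjective.mpr (hv ⟨x.val / k, hn⟩)
  have hx : blockIdx ⟨x.val / k, hn⟩ ⟨x.val % k, Nat.mod_lt _ hk⟩ = x :=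
    Fin.ext (Nat.div_add_mod _ _)
  have hy : blockIdx ⟨x.val / k, hn⟩ ⟨y.val % k, Nat.mod_lt _ hk⟩ = y := by
    apply Fin.ext
    simp only [blockIdx, hb]
    exact Nat.div_add_mod _ _
  have h := hinj (a₁ := ⟨x.val % k, Nat.mod_lt _ hk⟩) (a₂ := ⟨y.val % k, Nat.mod_lt _ hk⟩)
    (by simp only [hx, hy, hxy])
  rw [← hx, h, hy]

/-- The standard permutation of an alphabet-permutation power sends the occurrence of the letter
`a` in block `b` to `a * n + b`: that assignment is increasing for the order which `π` realizes,
and the only increasing self-map of `Fin (k * n)` is the identity. -/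
lemma stdPerm_val_s7 {k n : ℕ} {v : Fin (k * n) → Fin k} (hv : IsAlphaPermPower v)
    {π : Equiv.Perm (Fin (k * n))} (hπ : IsStdPerm v π) (x : Fin (k * n)) :
    (π x).val = (v x).val * n + x.val / k := by
  have hdiv (y : Fin (k * n)) : y.val / k < n := Nat.div_lt_of_lt_mul y.isLt
  have hstep {a b : ℕ} (h : a < b) : a * n + n ≤ b * n := by
    rw [← Nat.succ_mul]
    exact Nat.mul_le_mul_right n h
  let f : Fin (k * n) → Fin (k * n) := fun y => ⟨(v y).val * n + y.val / k, by
    have h1 := hdiv y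
    have h2 := hstep (v y).isLt
    omega⟩
  have hf : StrictMono (f ∘ π.symm) := by
    intro a b hab
    obtain ⟨y, rfl⟩ := π.surjective a
    obtain ⟨z, rfl⟩ := π.surjective b
    simp only [Function.comp_apply, Equiv.symm_apply_apply, f, Fin.mk_lt_mk]
    rcases (hπ y z).mp hab with h | ⟨h, hyz⟩
    · have h1 := hdiv y
      have h2 := hstep (Fin.lt_def.mp h)
      refine lt_of_lt_of_le ?_ (Nat.le_add_right _ _)
      omega
    · have h1 : y.val / k ≤ z.val / k := Nat.div_le_div_right hyz.le
      have h2 : y.val / k ≠ z.val / k := fun e => hyz.ne (hv.eq_of_block e h)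
      rw [h]
      omega
  have hsurj := Finite.injective_iff_surjective.mp hf.injective
  have hid : f ∘ π.symm = id :=
    (hf.range_inj strictMono_id).mp (by rw [hsurj.range_eq, Set.range_id])
  have h := congrFun hid (π x)
  simp only [Function.comp_apply, Equiv.symm_apply_apply, id] at h
  exact (congrArg Fin.val h).symm

theorem stmt7 (k n : ℕ) (u : Fin (k * n) → Fin k) (hu : IsAlphaPermPower (bwt u))
    (π : Equiv.Perm (Fin (k * n))) (hπ : IsStdPerm (bwt u) π)
    (i : ℕ) (hi : i + 1 < n) :
    TieAt (bwt u) i ↔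
      ∃ j : Fin k, ∃ (h3 : j.val * n + i < k * n) (h4 : j.val * n + i + 1 < k * n),
        (π⁻¹ ⟨j.val * n + i, h3⟩).val = k * i + (k - 1) ∧
        (π⁻¹ ⟨j.val * n + i + 1, h4⟩).val = k * (i + 1) := by
  -- The two positions lie in blocks `i` and `i + 1`.
  have hd1 (hk : 0 < k) : (k * i + (k - 1)) / k = i := by
    rw [Nat.mul_add_div hk, Nat.div_eq_of_lt (by omega), add_zero]
  have hd2 (hk : 0 < k) : k * (i + 1) / k = i + 1 := Nat.mul_div_cancel_left _ hk
  constructor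
  · rintro ⟨h1, h2, h⟩
    have hk : 0 < k := Nat.pos_of_mul_pos_right (Nat.zero_lt_of_lt h1)
    have e1 := stdPerm_val_s7 hu hπ ⟨_, h1⟩
    have e2 := stdPerm_val_s7 hu hπ ⟨_, h2⟩
    simp only [hd1 hk] at e1
    simp only [hd2 hk, ← h, ← add_assoc] at e2
    refine ⟨bwt u ⟨_, h1⟩, e1 ▸ Fin.isLt _, e2 ▸ Fin.isLt _, ?_, ?_⟩
    · simp only [← e1, Fin.eta, Equiv.Perm.inv_def, Equiv.symm_apply_apply]
    · simp only [← e2, Fin.eta, Equiv.Perm.inv_def, Equiv.symm_apply_apply]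
  · rintro ⟨j, h3, h4, p1, p2⟩
    have hk : 0 < k := j.pos
    have h1 : k * i + (k - 1) < k * n := p1 ▸ Fin.isLt _
    have h2 : k * (i + 1) < k * n := p2 ▸ Fin.isLt _
    have q1 : π ⟨_, h1⟩ = ⟨j.val * n + i, h3⟩ :=
      (Equiv.Perm.inv_eq_iff_eq.mp (Fin.ext p1)).symm
    have q2 : π ⟨_, h2⟩ = ⟨j.val * n + i + 1, h4⟩ :=
      (Equiv.Perm.inv_eq_iff_eq.mp (Fin.ext p2)).symm
    have e1 := stdPerm_val_s7 hu hπ ⟨_, h1⟩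
    have e2 := stdPerm_val_s7 hu hπ ⟨_, h2⟩
    simp only [q1, hd1 hk] at e1
    simp only [q2, hd2 hk] at e2
    refine ⟨h1, h2, Fin.ext (Nat.eq_of_mul_eq_mul_right (by omega : 0 < n) ?_)⟩
    omega
end

section
/- Let G be a directed graph on a finite vertex set V (edges given as a set E ⊆ V × V, loops allowed) and let A, B ⊆ V satisfy: (1) |A| ≥ 3 and |B| ≥ 3; (2) every pair (x,y) ∈ A × B is an edge of G; (3) every edge whose source is in A has its target in B. If γ is a Hamiltonian cycle of G that visits some edge e = (x,y) ∈ A × B, then there exists a Hamiltonian cycle γ′ of G such that γ′ does not visit e, and for every edge e′ ∉ A × B, γ′ visits e′ if and only if γ visits e′. -/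
lemma nextIdx_val {N : ℕ} (i : Fin N) :
    (nextIdx i).val = if i.val + 1 = N then 0 else i.val + 1 := by
  have hi := i.isLt
  unfold nextIdx
  split_ifs with h
  · simp [h]
  · exact Nat.mod_eq_of_lt (by omega)

lemma nextIdx_injective {N : ℕ} : Function.Injective (nextIdx : Fin N → Fin N) := by
  intro i j h
  have hv := congrArg Fin.val h
  rw [nextIdx_val, nextIdx_val] at hv
  have hi := i.isLt
  have hj := j.isLt
  ext
  split_ifs at hv <;> omega

/-- The reordering of positions that exchanges the factors `(p, q]` and `(q, r]`: it permutes the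
cyclic successors of `p`, `q`, `r` in a 3-cycle and preserves all other successors. -/
lemma exists_factor_exchange {N : ℕ} (p q r : Fin N) (hpq : p < q) (hqr : q < r) :
    ∃ τ : Fin N → Fin N, Function.Bijective τ ∧ ∀ i,
      (τ i = p ∧ τ (nextIdx i) = nextIdx q) ∨ (τ i = q ∧ τ (nextIdx i) = nextIdx r) ∨
      (τ i = r ∧ τ (nextIdx i) = nextIdx p) ∨
      (τ i ≠ p ∧ τ i ≠ q ∧ τ i ≠ r ∧ τ (nextIdx i) = nextIdx (τ i)) := by
  obtain ⟨p, hp⟩ := p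
  obtain ⟨q, hq⟩ := q
  obtain ⟨r, hr⟩ := r
  simp only [Fin.mk_lt_mk] at hpq hqr
  -- `f t` is the old position of the letter placed at `t`: the factor `(q, r]`, of length `r - q`,
  -- now comes directly after `p`, followed by `(p, q]`.
  let f : ℕ → ℕ := fun t =>
    if t ≤ p ∨ r < t then t else if t ≤ p + (r - q) then t + (q - p) else t - (r - q)
  have hf : ∀ t < N, f t < N := by
    intro t ht
    simp only [f]
    split_ifs <;> omega
  refine ⟨fun t => ⟨f t, hf t t.isLt⟩, Finite.injective_iff_bijective.mp ?_, ?_⟩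
  · intro s t h
    simp only [Fin.mk.injEq, f] at h
    ext
    split_ifs at h <;> omega
  · intro i
    have hi := i.isLt
    simp only [Fin.ext_iff, nextIdx_val, ne_eq, f]
    split_ifs <;> omega

theorem stmt8 {V : Type*} [Fintype V] (E : Set (V × V)) (A B : Set V)
    (hA : 3 ≤ A.ncard) (hB : 3 ≤ B.ncard)
    (hAB : ∀ x ∈ A, ∀ y ∈ B, (x, y) ∈ E)
    (hout : ∀ e ∈ E, e.1 ∈ A → e.2 ∈ B)
    (γ : Fin (Fintype.card V) → V) (hγ : IsHamCycle E γ)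
    (x y : V) (hx : x ∈ A) (hy : y ∈ B) (hvisit : Visits γ (x, y)) :
    ∃ γ' : Fin (Fintype.card V) → V, IsHamCycle E γ' ∧ ¬ Visits γ' (x, y) ∧
      ∀ e : V × V, ¬ (e.1 ∈ A ∧ e.2 ∈ B) → (Visits γ' e ↔ Visits γ e) := by
  classical
  obtain ⟨⟨hinj, hsurj⟩, hE⟩ := hγ
  obtain ⟨i₀, hi₀, hi₀'⟩ := hvisit
  simp only at hi₀ hi₀'
  have hnext : ∀ i, γ i ∈ A → γ (nextIdx i) ∈ B := fun i hi => hout _ (hE i) hi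
  obtain ⟨p, q, r, hpq, hqr, hp, hq, hr, hmem⟩ : ∃ p q r : Fin (Fintype.card V), p < q ∧ q < r ∧
      γ p ∈ A ∧ γ q ∈ A ∧ γ r ∈ A ∧ (i₀ = p ∨ i₀ = q ∨ i₀ = r) := by
    have hcard : 1 < (A \ {x}).ncard := by
      have := Set.ncard_sdiff_singleton_add_one hx
      omega
    obtain ⟨u, v, hu, hv, huv⟩ := (Set.one_lt_ncard_iff).mp hcard
    obtain ⟨j, rfl⟩ := hsurj u
    obtain ⟨k, rfl⟩ := hsurj v
    subst hi₀
    have hj : j ≠ i₀ := fun h => hu.2 (by simp [h])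
    have hk : k ≠ i₀ := fun h => hv.2 (by simp [h])
    have hjk : j ≠ k := fun h => huv (by simp [h])
    have hjA := hu.1
    have hkA := hv.1
    rcases lt_or_gt_of_ne hj with h1 | h1 <;> rcases lt_or_gt_of_ne hk with h2 | h2 <;>
      rcases lt_or_gt_of_ne hjk with h3 | h3
    · exact ⟨j, k, i₀, by simp_all⟩
    · exact ⟨k, j, i₀, by simp_all⟩
    · exact ⟨j, i₀, k, by simp_all⟩
    · exact absurd (h1.trans h2) (lt_asymm h3)
    · exact absurd (h2.trans h1) (lt_asymm h3)
    · exact ⟨k, i₀, j, by simp_all⟩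
    · exact ⟨i₀, j, k, by simp_all⟩
    · exact ⟨i₀, k, j, by simp_all⟩
  obtain ⟨τ, hτ, hstep⟩ := exists_factor_exchange p q r hpq hqr
  have hE' : ∀ i, (γ (τ i), γ (τ (nextIdx i))) ∈ E := by
    intro i
    rcases hstep i with ⟨h, h'⟩ | ⟨h, h'⟩ | ⟨h, h'⟩ | ⟨-, -, -, h'⟩ <;> rw [h']
    · rw [h]; exact hAB _ hp _ (hnext q hq)
    · rw [h]; exact hAB _ hq _ (hnext r hr)
    · rw [h]; exact hAB _ hr _ (hnext p hp)
    · exact hE _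
  -- Outside `A` the reordering leaves successors alone.
  have hkeep : ∀ i, γ (τ i) ∉ A → τ (nextIdx i) = nextIdx (τ i) := by
    intro i hi
    rcases hstep i with ⟨h, -⟩ | ⟨h, -⟩ | ⟨h, -⟩ | ⟨-, -, -, h'⟩
    · exact absurd (h ▸ hp) hi
    · exact absurd (h ▸ hq) hi
    · exact absurd (h ▸ hr) hi
    · exact h'
  refine ⟨γ ∘ τ, ⟨⟨hinj.comp hτ.1, hsurj.comp hτ.2⟩, hE'⟩, ?_, ?_⟩
  · rintro ⟨i, h1, h2⟩
    have h1' : τ i = i₀ := hinj (h1.trans hi₀.symm)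
    have h2' : τ (nextIdx i) = nextIdx i₀ := hinj (h2.trans hi₀'.symm)
    have hpr := hpq.trans hqr
    rcases hstep i with ⟨h, h'⟩ | ⟨h, h'⟩ | ⟨h, h'⟩ | ⟨n1, n2, n3, -⟩
    · exact hpq.ne (h.symm.trans (h1'.trans (nextIdx_injective (h2'.symm.trans h'))))
    · exact hqr.ne (h.symm.trans (h1'.trans (nextIdx_injective (h2'.symm.trans h'))))
    · exact hpr.ne' (h.symm.trans (h1'.trans (nextIdx_injective (h2'.symm.trans h'))))
    · rw [h1'] at n1 n2 n3
      tauto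
  · rintro ⟨a, b⟩ he
    constructor
    · rintro ⟨i, rfl, rfl⟩
      have hi : γ (τ i) ∉ A := fun h => he ⟨h, hout _ (hE' i) h⟩
      exact ⟨τ i, rfl, by simp [hkeep i hi]⟩
    · rintro ⟨j, rfl, rfl⟩
      have hj : γ j ∉ A := fun h => he ⟨h, hnext j h⟩
      obtain ⟨i, rfl⟩ := hτ.2 j
      exact ⟨i, rfl, by simp [hkeep i hj]⟩
end

section
/- Let k ≥ 3, let u be a generalized de Bruijn word of length kn over Σ_k, let w = BWT(u), and suppose i₀ is the rightmost tie of w (i.e., w has a tie at block i₀ and no tie at any block i > i₀). Then there exists a word w′ of length kn such that: (i) w′ = BWT(u′) for some generalized de Bruijn word u′ of length kn over Σ_k; (ii) w′_i = w_i for every position i outside block i₀, i.e., for every i ∉ {ki₀, ki₀+1, …, ki₀+k−1}; and (iii) w′ has no tie at block i for every i ≥ i₀. -/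
/-- The sorted list of rotations as a permutation `s` of the starting positions. The letter
cyclically preceding position `s m` is `u (s m - 1)`, with subtraction modulo `N`. -/
lemma exists_sortPerm {N k : ℕ} [NeZero N] (u : Fin N → Fin k) :
    ∃ s : Equiv.Perm (Fin N), Monotone ((fun j => toLex (rotl u j)) ∘ s) ∧
      ∀ m, bwt u m = u (s m - 1) := by
  have hperm : (sortedRot u).Perm (List.finRange N) := List.mergeSort_perm _ _
  have hnd : (sortedRot u).Nodup := hperm.nodup_iff.2 (List.nodup_finRange N)
  have hlen := length_sortedRot u
  have hpw : (sortedRot u).Pairwise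
      fun a b => decide (LexLe (rotl u a) (rotl u b)) = true := by
    apply List.pairwise_mergeSort
    · intro a b c
      simpa only [decide_eq_true_eq, lexLe_iff] using le_trans
    · intro a b
      simpa only [Bool.or_eq_true, decide_eq_true_eq, lexLe_iff] using le_total _ _
  let f : Fin N → Fin N := fun m => (sortedRot u)[m.val]'(by rw [hlen]; exact m.isLt)
  have hf : Function.Injective f := fun a b h =>
    Fin.ext ((List.Nodup.getElem_inj_iff hnd).1 h)
  refine ⟨Equiv.ofBijective f (Finite.injective_iff_bijective.1 hf), ?_, ?_⟩
  · intro a b hab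
    rcases hab.eq_or_lt with rfl | hlt
    · exact le_rfl
    · have := List.pairwise_iff_getElem.1 hpw a b (by rw [hlen]; exact a.isLt)
        (by rw [hlen]; exact b.isLt) hlt
      rw [decide_eq_true_eq, lexLe_iff] at this
      exact this
  · intro m
    change u _ = u (f m - 1)
    congr 1
    have hN : 0 < N := m.pos
    have hfm := (f m).isLt
    apply Fin.ext
    change ((f m).val + (N - 1)) % N = (f m - 1).val
    rw [Fin.sub_def]
    simp only [Fin.val_one']
    rcases Nat.lt_or_ge 1 N with h1 | h1
    · rw [Nat.mod_eq_of_lt h1, add_comm]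
    · have : N = 1 := by omega
      subst this
      simp

lemma rotl_sub_one_zero {N k : ℕ} [NeZero N] (u : Fin N → Fin k) (a : Fin N) :
    rotl u (a - 1) 0 = u (a - 1) := by simp [rotl]

/-- Moving the last letter of a rotation to the front preserves the lexicographic order
whenever the moved letters agree, and otherwise the moved letters decide. -/
lemma rotl_sub_one_lt {N k : ℕ} [NeZero N] (u : Fin N → Fin k) (a b : Fin N)
    (h : u (a - 1) < u (b - 1) ∨
      (u (a - 1) = u (b - 1) ∧ toLex (rotl u a) < toLex (rotl u b))) :
    toLex (rotl u (a - 1)) < toLex (rotl u (b - 1)) := by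
  rcases h with h | ⟨h, i, hi, hlt⟩
  · exact ⟨0, fun j hj => absurd hj (Fin.not_lt_zero j), by simpa [rotl] using h⟩
  · -- the first difference cannot sit at the last letter, where both rotations agree
    have key : ∀ (c : Fin N) (j : Fin N), rotl u (c - 1) (j + 1) = rotl u c j := by
      intro c j; simp only [rotl]; congr 1; abel
    have hlast : i.val + 1 < N := by
      by_contra hcon
      have hi1 : i + 1 = 0 := by
        apply Fin.ext
        have : i.val + 1 = N := by have := i.isLt; omega
        rw [Fin.val_add, Fin.val_one', Nat.add_mod_mod, this]; simp
      have e : ∀ c : Fin N, i + c = c - 1 := by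
        intro c; rw [eq_neg_of_add_eq_zero_left hi1]; abel
      have hlt' : u (i + a) < u (i + b) := hlt
      rw [e, e, h] at hlt'
      exact lt_irrefl _ hlt'
    have hv : ∀ j : Fin N, j.val + 1 < N → (j + 1).val = j.val + 1 := by
      intro j hj
      rw [Fin.val_add, Fin.val_one', Nat.add_mod_mod, Nat.mod_eq_of_lt hj]
    refine ⟨i + 1, fun j hj => ?_, ?_⟩
    · change rotl u (a - 1) j = rotl u (b - 1) j
      by_cases hj0 : j = 0
      · subst hj0; rw [rotl_sub_one_zero, rotl_sub_one_zero, h]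
      · have hj0' : j.val ≠ 0 := fun e => hj0 (Fin.ext (by simpa using e))
        have hji : j.val < i.val + 1 := by rw [← hv i hlast]; exact hj
        obtain ⟨j', rfl⟩ : ∃ j', j = j' + 1 := ⟨j - 1, by abel⟩
        rw [key, key]
        refine hi j' ?_
        by_cases hj' : j'.val + 1 < N
        · rw [hv j' hj'] at hji; exact Fin.lt_def.2 (by omega)
        · exfalso; apply hj0'
          have : j'.val + 1 = N := by have := j'.isLt; omega
          rw [Fin.val_add, Fin.val_one', Nat.add_mod_mod, this]; simp
    · change rotl u (a - 1) (i + 1) < rotl u (b - 1) (i + 1)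
      rw [key, key]; exact hlt

open Equiv.Perm Fin.CommRing in
/-- The standard permutation of `bwt u` sends the rank of a rotation to the rank of the rotation
starting one position earlier, so it is conjugate to `j ↦ j - 1`. The hypothesis on the first two
letters excludes repeated rotations: if some rotation occurs twice then so does the smallest one,
and the two smallest rotations have the same last letter. -/
lemma exists_stdPerm {N k : ℕ} [NeZero N] (u : Fin N → Fin k)
    (h01 : ∀ h : 1 < N, bwt u 0 ≠ bwt u ⟨1, h⟩) :
    ∃ π : Equiv.Perm (Fin N), IsStdPerm (bwt u) π ∧ π.IsCycleOn (Finset.univ : Finset (Fin N)) := by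
  obtain ⟨s, hs, hb⟩ := exists_sortPerm u
  have hinj : Function.Injective fun j => toLex (rotl u j) := by
    intro a b hab
    by_contra hne
    -- rotating further, the smallest rotation also occurs twice
    have hab' : rotl u a = rotl u b := hab
    have hrot : rotl u (s 0) = rotl u (s 0 - a + b) := by
      funext i
      have := congrFun hab' (i + (s 0 - a))
      simp only [rotl] at this ⊢
      convert this using 2 <;> abel
    obtain ⟨m, hm⟩ := s.surjective (s 0 - a + b)
    have hm0 : m ≠ 0 := by
      rintro rfl
      apply hne
      have : s 0 - a + b - (s 0 - a) = s 0 - (s 0 - a) := by rw [← hm]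
      have h2 : b = a := by simpa using this
      exact h2.symm
    have hmv : m.val ≠ 0 := fun e => hm0 (Fin.ext (by simpa using e))
    have h1N : 1 < N := by have := m.isLt; omega
    have hle1 := hs (show (0 : Fin N) ≤ ⟨1, h1N⟩ from Fin.zero_le _)
    have hle2 := hs (show (⟨1, h1N⟩ : Fin N) ≤ m from Fin.le_def.2 (by simp; omega))
    simp only [Function.comp] at hle1 hle2
    rw [hm, ← hrot] at hle2
    have heq : rotl u (s 0) = rotl u (s ⟨1, h1N⟩) := toLex.injective (le_antisymm hle1 hle2)
    apply h01 h1N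
    rw [hb, hb]
    have := congrFun heq (-1)
    simp only [rotl] at this
    convert this using 2 <;> abel
  have hsm : StrictMono ((fun j => toLex (rotl u j)) ∘ s) :=
    hs.strictMono_of_injective (hinj.comp s.injective)
  let π : Equiv.Perm (Fin N) := s.trans ((Equiv.subRight 1).trans s.symm)
  have hsπ : ∀ m, s (π m) = s m - 1 := by intro m; simp [π]
  refine ⟨π, ?_, ?_, ?_⟩
  · have fwd : ∀ i j, (bwt u i < bwt u j ∨ (bwt u i = bwt u j ∧ i < j)) → π i < π j := by
      intro i j h
      rw [← hsm.lt_iff_lt]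
      simp only [Function.comp, hsπ]
      apply rotl_sub_one_lt
      rw [← hb, ← hb]
      exact h.imp_right fun h => ⟨h.1, hsm h.2⟩
    intro i j
    refine ⟨fun h => ?_, fwd i j⟩
    by_contra hcon
    have hij : i ≠ j := by rintro rfl; exact lt_irrefl _ h
    refine lt_asymm h (fwd j i ?_)
    push Not at hcon
    rcases hcon.1.lt_or_eq with h1 | h1
    · exact Or.inl h1
    · exact Or.inr ⟨h1, lt_of_le_of_ne (hcon.2 h1.symm) hij.symm⟩
  · simp
  · intro x _ y _
    have hpow : ∀ t : ℕ, s ((π ^ t) x) = s x - (t : Fin N) := by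
      intro t
      induction t with
      | zero => simp
      | succ t ih => rw [pow_succ', mul_apply, hsπ, ih]; push_cast; abel
    refine ⟨((s x - s y).val : ℕ), ?_⟩
    rw [zpow_natCast]
    apply s.injective
    rw [hpow, Fin.cast_val_eq_self]; abel

open Equiv.Perm in
/-- Inverse transform: reading `v` backwards along its standard permutation, starting from rank
`0`, gives a word whose rotation at `j` has rank `(π⁻¹ ^ j) 0`. -/
lemma exists_bwt_eq_s9 {N k : ℕ} [NeZero N] (v : Fin N → Fin k) (π : Equiv.Perm (Fin N))
    (hstd : IsStdPerm v π) (hcyc : π.IsCycleOn (Finset.univ : Finset (Fin N))) :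
    ∃ u : Fin N → Fin k, bwt u = v := by
  have hcyc' : (π⁻¹).IsCycleOn (Finset.univ : Finset (Fin N)) := hcyc.inv
  let X : Fin N → Lex (Fin N → Fin k) := fun p => toLex fun t => v ((π⁻¹ ^ (t.val + 1)) p)
  have hinv : ∀ x, π (π⁻¹ x) = x := π.apply_symm_apply
  -- `X p` is the rotation that ends up with rank `p`; as long as two of them agree, the order
  -- of their ranks is carried along `π⁻¹`
  have hX : Monotone X := by
    intro p q hpq
    by_contra hcon
    obtain ⟨t, ht, hlt⟩ := not_le.1 hcon
    have ht' : ∀ j < t, v ((π⁻¹ ^ (j.val + 1)) q) = v ((π⁻¹ ^ (j.val + 1)) p) := ht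
    have hlt' : v ((π⁻¹ ^ (t.val + 1)) q) < v ((π⁻¹ ^ (t.val + 1)) p) := hlt
    have hord : ∀ m : ℕ, m ≤ t.val → (π⁻¹ ^ m) p ≤ (π⁻¹ ^ m) q := by
      intro m
      induction m with
      | zero => intro _; simpa using hpq
      | succ m ih =>
        intro hm
        have h1 := ih (by omega)
        have h2 := ht' ⟨m, by omega⟩ (Fin.lt_def.2 (by simp; omega))
        simp only at h2
        by_contra h3
        have h4 := (hstd _ _).2 (Or.inr ⟨h2, not_le.1 h3⟩)
        rw [pow_succ', mul_apply, mul_apply, hinv, hinv] at h4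
        exact absurd h1 (not_le.2 h4)
    have h4 := (hstd _ _).2 (Or.inl hlt')
    rw [pow_succ', mul_apply, mul_apply, hinv, hinv] at h4
    exact absurd (hord t le_rfl) (not_le.2 h4)
  have hper : ∀ (m m' : ℕ) (p : Fin N), m ≡ m' [MOD N] → (π⁻¹ ^ m) p = (π⁻¹ ^ m') p := by
    intro m m' p h
    rw [hcyc'.pow_apply_eq_pow_apply (Finset.mem_univ p)]
    simpa using h
  let f : Fin N → Fin N := fun j => (π⁻¹ ^ j.val) 0
  have hf : Function.Injective f := by
    intro a b hab
    have := (hcyc'.pow_apply_eq_pow_apply (Finset.mem_univ (0 : Fin N))).1 hab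
    rw [Finset.card_univ, Fintype.card_fin] at this
    exact Fin.ext (Nat.ModEq.eq_of_lt_of_lt this a.isLt b.isLt)
  let e : Equiv.Perm (Fin N) := Equiv.ofBijective f (Finite.injective_iff_bijective.1 hf)
  let u : Fin N → Fin k := fun i => v ((π⁻¹ ^ (i.val + 1)) 0)
  have hrot : (fun j => toLex (rotl u j)) = X ∘ e := by
    funext j
    change (toLex fun i => u (i + j)) = toLex fun t : Fin N => v ((π⁻¹ ^ (t.val + 1)) (f j))
    congr 1
    funext i
    simp only [u, f]
    rw [← mul_apply, ← pow_add]
    congr 1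
    apply hper
    rw [Fin.val_add]
    have : (i.val + j.val) % N + 1 ≡ i.val + j.val + 1 [MOD N] :=
      (Nat.mod_modEq _ _).add_right 1
    exact this.trans (by rw [show i.val + j.val + 1 = i.val + 1 + j.val by ring])
  obtain ⟨s, hs, hb⟩ := exists_sortPerm u
  have huniq := Tuple.unique_monotone (τ := e.symm) hs (by
    rw [hrot, Function.comp_assoc]
    rw [Equiv.self_comp_symm]; exact hX)
  refine ⟨u, funext fun m => ?_⟩
  have h1 : rotl u (s m) = fun t : Fin N => v ((π⁻¹ ^ (t.val + 1)) m) := by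
    have h := congrFun huniq m
    have h' := congrFun hrot (e.symm m)
    simp only [Function.comp, Equiv.apply_symm_apply] at h h'
    exact toLex.injective (h.trans h')
  have h2 := congrFun h1 (-1)
  simp only [rotl] at h2
  rw [hb, show s m - 1 = -1 + s m by abel, h2]
  congr 1
  have : (-1 : Fin N).val + 1 ≡ 0 [MOD N] := by
    have h0 : ((-1 : Fin N) + 1).val = 0 := by simp
    rw [Fin.val_add, Fin.val_one', Nat.add_mod_mod] at h0
    exact h0
  rw [hper _ _ m this]; simp

open Equiv Equiv.Perm in
/-- Three-cycle lemma, with the points listed in the order in which the cycle `π` meets them. -/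
lemma isCycleOn_mul_threeCycle {N : ℕ} (π : Perm (Fin N))
    (hπ : π.IsCycleOn (Finset.univ : Finset (Fin N))) (a : Fin N) (t₁ t₂ : ℕ)
    (h1 : 0 < t₁) (h12 : t₁ < t₂) (h2 : t₂ < N) :
    (π * (swap a ((π ^ t₁) a) * swap ((π ^ t₁) a) ((π ^ t₂) a))).IsCycleOn
      (Finset.univ : Finset (Fin N)) := by
  set b := (π ^ t₁) a with hb
  set c := (π ^ t₂) a with hc
  have hinj : ∀ i j : ℕ, i < N → j < N → (π ^ i) a = (π ^ j) a → i = j := by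
    intro i j hi hj h
    have := (hπ.pow_apply_eq_pow_apply (Finset.mem_univ a)).1 h
    rw [Finset.card_univ, Fintype.card_fin] at this
    exact this.eq_of_lt_of_lt hi hj
  have hab : a ≠ b := fun h => by
    have := hinj 0 t₁ (by omega) (by omega) (by simpa using h); omega
  have hac : a ≠ c := fun h => by
    have := hinj 0 t₂ (by omega) (by omega) (by simpa using h); omega
  have hbc : b ≠ c := fun h => by
    have := hinj t₁ t₂ (by omega) (by omega) h; omega
  set σ := π * (swap a b * swap b c) with hσ
  have σa : σ a = π b := by
    simp [hσ, mul_apply, swap_apply_of_ne_of_ne hab hac]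
  have σb : σ b = π c := by
    simp [hσ, mul_apply, swap_apply_of_ne_of_ne hac.symm hbc.symm]
  have σc : σ c = π a := by simp [hσ, mul_apply]
  have σx : ∀ x, x ≠ a → x ≠ b → x ≠ c → σ x = π x := by
    intro x ha hb hc
    simp [hσ, mul_apply, swap_apply_of_ne_of_ne hb hc, swap_apply_of_ne_of_ne ha hb]
  -- between consecutive visits of `π` to `{a, b, c}`, the orbits of `σ` follow those of `π`
  have walk : ∀ (y : Fin N) (lo hi : ℕ), hi ≤ N → σ y = (π ^ (lo + 1)) a →
      (∀ t, lo < t → t < hi → t ≠ 0 ∧ t ≠ t₁ ∧ t ≠ t₂) →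
      ∀ t, lo < t → t ≤ hi → σ.SameCycle y ((π ^ t) a) := by
    intro y lo hi hhi hy hgap t hlt
    induction t, hlt using Nat.le_induction with
    | base => intro _; rw [← hy]; exact sameCycle_apply_right.2 (SameCycle.refl _ _)
    | succ t ht ih =>
      intro hle
      obtain ⟨g0, g1, g2⟩ := hgap t ht (by omega)
      have hstep : (π ^ (t + 1)) a = σ ((π ^ t) a) := by
        rw [pow_succ', mul_apply, σx]
        · intro h; exact g0 (hinj t 0 (by omega) (by omega) (by simpa using h))
        · intro h; exact g1 (hinj t t₁ (by omega) (by omega) h)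
        · intro h; exact g2 (hinj t t₂ (by omega) (by omega) h)
      rw [hstep]
      exact sameCycle_apply_right.2 (ih (by omega))
  have w1 := walk c 0 t₁ (by omega) (by simpa using σc) (by intro t _ _; omega)
  have w2 := walk a t₁ t₂ (by omega) (by rw [σa, pow_succ', mul_apply])
    (by intro t _ _; omega)
  have w3 := walk b t₂ N le_rfl (by rw [σb, pow_succ', mul_apply]) (by intro t _ _; omega)
  have hcb : σ.SameCycle c b := w1 t₁ h1 le_rfl
  have hac' : σ.SameCycle a c := w2 t₂ h12 le_rfl
  have hall : ∀ x, σ.SameCycle a x := by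
    intro x
    obtain ⟨t, ht, rfl⟩ := hπ.exists_pow_eq (Finset.mem_univ a) (Finset.mem_univ x)
    rw [Finset.card_univ, Fintype.card_fin] at ht
    rcases Nat.eq_zero_or_pos t with rfl | h0
    · simpa using SameCycle.refl σ a
    rcases le_or_gt t t₁ with h | h
    · exact hac'.trans (w1 t h0 h)
    rcases le_or_gt t t₂ with h' | h'
    · exact w2 t h h'
    · exact (hac'.trans hcb).trans (w3 t h' ht.le)
  refine ⟨by simp, fun x _ y _ => (hall x).symm.trans (hall y)⟩

open Equiv Equiv.Perm in
/-- One of the two orientations of the three-cycle on `a`, `b`, `c` keeps the product with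
a cycle through all points a cycle through all points. -/
lemma exists_threeCycle {N : ℕ} (π : Perm (Fin N))
    (hπ : π.IsCycleOn (Finset.univ : Finset (Fin N))) (a b c : Fin N)
    (hab : a ≠ b) (hac : a ≠ c) (hbc : b ≠ c) :
    ∃ τ : Perm (Fin N), (π * τ).IsCycleOn (Finset.univ : Finset (Fin N)) ∧ τ a ≠ a ∧
      (∀ x, x ≠ a → x ≠ b → x ≠ c → τ x = x) ∧
      ∀ x, (x = a ∨ x = b ∨ x = c) → (τ x = a ∨ τ x = b ∨ τ x = c) := by
  have main : ∀ (b c : Fin N) (t₁ t₂ : ℕ), a ≠ b → a ≠ c → b ≠ c → t₁ < t₂ → t₂ < N →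
      (π ^ t₁) a = b → (π ^ t₂) a = c →
      ∃ τ : Perm (Fin N), (π * τ).IsCycleOn (Finset.univ : Finset (Fin N)) ∧ τ a ≠ a ∧
      (∀ x, x ≠ a → x ≠ b → x ≠ c → τ x = x) ∧
      ∀ x, (x = a ∨ x = b ∨ x = c) → (τ x = a ∨ τ x = b ∨ τ x = c) := by
    intro b c t₁ t₂ hab hac hbc h12 h2 hb hc
    have h1 : 0 < t₁ := by
      rcases Nat.eq_zero_or_pos t₁ with rfl | h
      · exact absurd (by simpa using hb) hab
      · exact h
    have hcyc := isCycleOn_mul_threeCycle π hπ a t₁ t₂ h1 h12 h2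
    rw [hb, hc] at hcyc
    have ta : (swap a b * swap b c) a = b := by
      simp [mul_apply, swap_apply_of_ne_of_ne hab hac]
    have tb : (swap a b * swap b c) b = c := by
      simp [mul_apply, swap_apply_of_ne_of_ne hac.symm hbc.symm]
    have tc : (swap a b * swap b c) c = a := by simp [mul_apply]
    refine ⟨_, hcyc, by rw [ta]; exact hab.symm, ?_, ?_⟩
    · intro x ha hb hc
      simp [mul_apply, swap_apply_of_ne_of_ne hb hc, swap_apply_of_ne_of_ne ha hb]
    · rintro x (rfl | rfl | rfl)
      · exact Or.inr (Or.inl ta)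
      · exact Or.inr (Or.inr tb)
      · exact Or.inl tc
  obtain ⟨t₁, h1, e1⟩ := hπ.exists_pow_eq (Finset.mem_univ a) (Finset.mem_univ b)
  obtain ⟨t₂, h2, e2⟩ := hπ.exists_pow_eq (Finset.mem_univ a) (Finset.mem_univ c)
  rw [Finset.card_univ, Fintype.card_fin] at h1 h2
  rcases lt_trichotomy t₁ t₂ with h | h | h
  · exact main b c t₁ t₂ hab hac hbc h h2 e1 e2
  · exact absurd (by rw [← e1, ← e2, h]) hbc
  · obtain ⟨τ, p1, p2, p3, p4⟩ := main c b t₂ t₁ hac hab hbc.symm h h1 e2 e1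
    exact ⟨τ, p1, p2, fun x ha hb hc => p3 x ha hc hb, fun x hx => by
      have := p4 x (by tauto)
      tauto⟩

/-- The `k` letters of a block are pairwise distinct. -/
lemma IsAlphaPermPower.eq_of_same_block {k n : ℕ} {v : Fin (k * n) → Fin k}
    (hv : IsAlphaPermPower v) {x y : Fin (k * n)} (hxy : x.val / k = y.val / k)
    (h : v x = v y) : x = y := by
  have hk : 0 < k := Nat.pos_of_mul_pos_right (Nat.zero_lt_of_lt x.isLt)
  have hlt : x.val / k < n := Nat.div_lt_of_lt_mul x.isLt
  have e : ∀ z : Fin (k * n), z.val / k = x.val / k →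
      z = blockIdx (⟨x.val / k, hlt⟩ : Fin n) ⟨z.val % k, Nat.mod_lt _ hk⟩ := by
    intro z hz
    apply Fin.ext
    simp only [blockIdx, ← hz]
    exact (Nat.div_add_mod _ _).symm
  have hinj := Finite.injective_iff_surjective.2 (hv ⟨x.val / k, hlt⟩)
  rw [e x rfl, e y hxy.symm] at h
  have := hinj h
  rw [e x rfl, e y hxy.symm, this]

/-- Permuting letters inside blocks moves the standard permutation by the same permutation,
since equal letters lie in different blocks. -/
lemma isStdPerm_comp {k n : ℕ} {v : Fin (k * n) → Fin k} (hv : IsAlphaPermPower v)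
    {π τ : Equiv.Perm (Fin (k * n))} (hπ : IsStdPerm v π)
    (hτ : ∀ x, (τ x).val / k = x.val / k) : IsStdPerm (v ∘ τ) (π * τ) := by
  have hlt : ∀ i j : Fin (k * n), v (τ i) = v (τ j) → (τ i < τ j → i < j) := by
    intro i j hij h
    have hne : (τ i).val / k ≠ (τ j).val / k := fun hb =>
      h.ne (hv.eq_of_same_block hb hij)
    have hle : (τ i).val / k ≤ (τ j).val / k := Nat.div_le_div_right (Fin.le_def.1 h.le)
    rw [hτ, hτ] at hne hle
    by_contra hcon
    have := Nat.div_le_div_right (c := k) (Fin.le_def.1 (not_lt.1 hcon))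
    omega
  intro i j
  rw [Equiv.Perm.mul_apply, Equiv.Perm.mul_apply, hπ]
  refine or_congr Iff.rfl (and_congr_right fun hij => ⟨hlt i j hij, fun h => ?_⟩)
  rcases lt_trichotomy (τ i) (τ j) with h' | h' | h'
  · exact h'
  · exact absurd (τ.injective h') h.ne
  · exact absurd (hlt j i hij.symm h') (lt_asymm h)

lemma IsAlphaPermPower.comp {k n : ℕ} {v : Fin (k * n) → Fin k} (hv : IsAlphaPermPower v)
    {τ : Equiv.Perm (Fin (k * n))} (hτ : ∀ x, (τ x).val / k = x.val / k) :
    IsAlphaPermPower (v ∘ τ) := by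
  intro b
  rw [← Finite.injective_iff_surjective]
  intro i j hij
  have hblk : ∀ i : Fin k, (blockIdx b i).val / k = b.val := by
    intro i
    simp only [blockIdx]
    rw [Nat.mul_add_div i.pos, Nat.div_eq_of_lt i.isLt, add_zero]
  have := hv.eq_of_same_block (by rw [hτ, hτ, hblk, hblk]) hij
  have := congrArg Fin.val (τ.injective this)
  simp only [blockIdx] at this
  exact Fin.ext (by omega)

theorem stmt9 (k n : ℕ) (hk : 3 ≤ k) (u : Fin (k * n) → Fin k)
    (hu : IsAlphaPermPower (bwt u)) (i₀ : ℕ) (htie : TieAt (bwt u) i₀)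
    (hrightmost : ∀ i, i₀ < i → ¬ TieAt (bwt u) i) :
    ∃ u' : Fin (k * n) → Fin k, IsAlphaPermPower (bwt u') ∧
      (∀ m : Fin (k * n), (m.val < k * i₀ ∨ k * (i₀ + 1) ≤ m.val) → bwt u' m = bwt u m) ∧
      ∀ i, i₀ ≤ i → ¬ TieAt (bwt u') i := by
  set v := bwt u with hv
  obtain ⟨hp1, hp2, htie⟩ := htie
  have hblock : k * (i₀ + 1) = k * i₀ + k := by ring
  have : NeZero (k * n) := ⟨by omega⟩
  have h01 : ∀ h : 1 < k * n, v 0 ≠ v ⟨1, h⟩ := by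
    intro h heq
    have := hu.eq_of_same_block (by
      rw [Fin.val_zero, Nat.div_eq_of_lt (by omega), Nat.div_eq_of_lt (by simp; omega)]) heq
    simpa using congrArg Fin.val this
  obtain ⟨π, hstd, hcyc⟩ := exists_stdPerm u h01
  -- the last, the first and the second position of block `i₀`
  let a : Fin (k * n) := ⟨k * i₀ + (k - 1), hp1⟩
  let b : Fin (k * n) := ⟨k * i₀, by omega⟩
  let c : Fin (k * n) := ⟨k * i₀ + 1, by omega⟩
  obtain ⟨τ, hτcyc, hτa, hτfix, hτmap⟩ := exists_threeCycle π hcyc a b c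
    (Fin.ne_of_val_ne (by simp [a, b]; omega)) (Fin.ne_of_val_ne (by simp [a, c]; omega))
    (Fin.ne_of_val_ne (by simp [b, c]))
  have hin : ∀ x, (x = a ∨ x = b ∨ x = c) → x.val / k = i₀ := by
    have hdiv : ∀ r, r < k → (k * i₀ + r) / k = i₀ := fun r hr => by
      rw [Nat.mul_add_div (by omega), Nat.div_eq_of_lt hr, add_zero]
    rintro x (rfl | rfl | rfl)
    · exact hdiv (k - 1) (by omega)
    · exact hdiv 0 (by omega)
    · exact hdiv 1 (by omega)
  have hτblk : ∀ x, (τ x).val / k = x.val / k := by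
    intro x
    by_cases hx : x = a ∨ x = b ∨ x = c
    · rw [hin x hx, hin _ (hτmap x hx)]
    · rw [hτfix x (by tauto) (by tauto) (by tauto)]
  have hτout : ∀ m : Fin (k * n), (m.val < k * i₀ ∨ k * (i₀ + 1) ≤ m.val) → τ m = m := by
    intro m hm
    refine hτfix m ?_ ?_ ?_ <;>
    · rintro rfl
      simp only [a, b, c] at hm
      omega
  obtain ⟨u', hu'⟩ := exists_bwt_eq_s9 (v ∘ τ) (π * τ) (isStdPerm_comp hu hstd hτblk) hτcyc
  refine ⟨u', by rw [hu']; exact hu.comp hτblk, fun m hm => ?_, fun i hi => ?_⟩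
  · rw [hu', Function.comp, hτout m hm]
  · rw [hu']
    rintro ⟨q1, q2, hq⟩
    simp only [Function.comp] at hq
    rcases hi.eq_or_lt with rfl | hlt
    · rw [hτout ⟨k * (i₀ + 1), q2⟩ (Or.inr le_rfl), ← htie] at hq
      exact hτa (hu.eq_of_same_block (hτblk a) hq)
    · have hge : k * (i₀ + 1) ≤ k * i := Nat.mul_le_mul_left k hlt
      have hge' : k * i ≤ k * (i + 1) := Nat.mul_le_mul_left k (Nat.le_succ i)
      rw [hτout ⟨k * i + (k - 1), q1⟩ (Or.inr (by simp only; omega)),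
        hτout ⟨k * (i + 1), q2⟩ (Or.inr (by simp only; omega))] at hq
      exact hrightmost i hlt ⟨q1, q2, hq⟩
end
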